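/- Let N ≥ 1 and q > 1, with q' = q/(q−1). There exists C = C(N,q) > 0 such that for every T > 0, every r, ρ > 0, every compact set K ⊆ B_r, every η ∈ 𝒯_{r,ρ}(K), and every positive solution u of ∂_t u − Δu + u^q = 0 in Q_∞ whose initial trace vanishes outside K, setting ζ(x,t) = (1 − ℍ[η](x,t))^{2q'}, one has ∬_{ℝ^N×(0,T]} u^q ζ dx dt + ∫_{ℝ^N} u(x,T) ζ(x,T) dx ≤ C ‖R[η]‖_{L^{q'}}^{q'}. -/

import Mathlib

open MeasureTheory Real Set Filter Metric

noncomputable section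

abbrev Euc (N : ℕ) := EuclideanSpace ℝ (Fin N)

/-- Spatial Laplacian of `f : ℝ^N → ℝ`. -/
def lapl {N : ℕ} (f : Euc N → ℝ) (x : Euc N) : ℝ :=
  ∑ i : Fin N,
    fderiv ℝ (fun y => fderiv ℝ f y (EuclideanSpace.single i 1)) x (EuclideanSpace.single i 1)

/-- The capacity `C_{2/q,q'}` of a set `A ⊆ ℝ^N`. -/
def capQ (N : ℕ) (q : ℝ) (A : Set (Euc N)) : ℝ :=
  sInf { c : ℝ | ∃ φ : Euc N → ℝ, ContDiff ℝ (⊤ : ℕ∞) φ ∧ HasCompactSupport φ ∧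
      (∃ U : Set (Euc N), IsOpen U ∧ A ⊆ U ∧ ∀ x ∈ U, 1 ≤ φ x) ∧
      c = (∫ x, φ x ^ (q / (q - 1))) +
          ∫ x, ∫ y, |φ x - φ y| ^ (q / (q - 1)) / ‖x - y‖ ^ ((N : ℝ) + 2 / (q - 1)) }

/-- The spherical shell piece `F_n` of `F` around `x` at time `t`. -/
def shell (N : ℕ) (F : Set (Euc N)) (x : Euc N) (t : ℝ) (n : ℕ) : Set (Euc N) :=
  {y | y ∈ F ∧ Real.sqrt ((n : ℝ) * t) ≤ dist x y ∧ dist x y ≤ Real.sqrt (((n : ℝ) + 1) * t)}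

/-- The parabolic capacitary potential `W_F`. -/
def Wpot (N : ℕ) (q : ℝ) (F : Set (Euc N)) (x : Euc N) (t : ℝ) : ℝ :=
  t ^ (-(N : ℝ) / 2) *
    ∑' n : ℕ,
      Real.sqrt (((n : ℝ) + 1) * t) ^ ((N : ℝ) - 2 / (q - 1)) * Real.exp (-(n : ℝ) / 4) *
        capQ N q ((fun y => (Real.sqrt (((n : ℝ) + 1) * t))⁻¹ • y) '' shell N F x t n)

/-- `u` is a positive solution of `∂ₜu - Δu + u^q = 0` in `Q_∞` whose initial
trace vanishes outside the closed set `F`. -/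
def IsSol (N : ℕ) (q : ℝ) (u : Euc N → ℝ → ℝ) (F : Set (Euc N)) : Prop :=
  ContDiffOn ℝ 2 (fun p : Euc N × ℝ => u p.1 p.2) (Set.univ ×ˢ Set.Ioi (0 : ℝ)) ∧
  (∀ x t, 0 < t → 0 < u x t) ∧
  (∀ x t, 0 < t → deriv (u x) t - lapl (fun y => u y t) x + u x t ^ q = 0) ∧
  (∀ E : Set (Euc N), IsCompact E → E ⊆ Fᶜ →
    Tendsto (fun t => sSup ((fun x => u x t) '' E)) (nhdsWithin 0 (Set.Ioi 0)) (nhds 0))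

/-- The heat potential of a function. -/
def heatPot (N : ℕ) (η : Euc N → ℝ) (x : Euc N) (t : ℝ) : ℝ :=
  ∫ y, (4 * π * t) ^ (-(N : ℝ) / 2) * Real.exp (-‖x - y‖ ^ 2 / (4 * t)) * η y

/-- The heat potential of a measure. -/
def heatPotM (N : ℕ) (μ : Measure (Euc N)) (x : Euc N) (t : ℝ) : ℝ :=
  ∫ y, (4 * π * t) ^ (-(N : ℝ) / 2) * Real.exp (-‖x - y‖ ^ 2 / (4 * t)) ∂μ

/-- The class `𝒯_{r,ρ}(K)` of test functions. -/
def TestFun (N : ℕ) (r ρ : ℝ) (K : Set (Euc N)) (η : Euc N → ℝ) : Prop :=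
  ContDiff ℝ (⊤ : ℕ∞) η ∧ HasCompactSupport η ∧ tsupport η ⊆ Metric.ball (0 : Euc N) (r + ρ) ∧
  (∀ x, 0 ≤ η x ∧ η x ≤ 1) ∧ (∀ x ∈ K, η x = 1)

/-- `‖R[η]‖_{L^{q'}}^{q'} = ∬_{Q_∞} (|∇ℍ[η]|² + |∂ₜℍ[η]|)^{q'} dx dt`. -/
def Rnorm (N : ℕ) (q : ℝ) (η : Euc N → ℝ) : ℝ :=
  ∫ t in Set.Ioi (0 : ℝ), ∫ x,
    (‖fderiv ℝ (fun y => heatPot N η y t) x‖ ^ 2 +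
      |deriv (fun τ => heatPot N η x τ) t|) ^ (q / (q - 1))

section

/-- directional derivative in coordinate direction -/
def Dd {N : ℕ} (i : Fin N) (f : Euc N → ℝ) (x : Euc N) : ℝ :=
  fderiv ℝ f x (EuclideanSpace.single i 1)

lemma lapl_eq {N : ℕ} (f : Euc N → ℝ) (x : Euc N) : lapl f x = ∑ i, Dd i (Dd i f) x := rfl

lemma Dd_contDiff {N : ℕ} {i : Fin N} {f : Euc N → ℝ} {m n : WithTop ℕ∞} (hf : ContDiff ℝ n f)
    (h : m + 1 ≤ n) : ContDiff ℝ m (Dd i f) :=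
  (hf.fderiv_right h).clm_apply contDiff_const

lemma Dd_supp {N : ℕ} {i : Fin N} {f : Euc N → ℝ} (hf : HasCompactSupport f) :
    HasCompactSupport (Dd i f) :=
  (hf.fderiv (𝕜 := ℝ)).comp_left (g := fun L : Euc N →L[ℝ] ℝ => L (EuclideanSpace.single i 1)) (by simp)

lemma Dd_mul {N : ℕ} {i : Fin N} {f g : Euc N → ℝ} (hf : Differentiable ℝ f)
    (hg : Differentiable ℝ g) : Dd i (fun x => f x * g x) = fun x => f x * Dd i g x + g x * Dd i f x := by
  funext x
  unfold Dd
  rw [fderiv_fun_mul (hf x) (hg x)]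
  simp

lemma Dd_add {N : ℕ} {i : Fin N} {f g : Euc N → ℝ} (hf : Differentiable ℝ f)
    (hg : Differentiable ℝ g) : Dd i (fun x => f x + g x) = fun x => Dd i f x + Dd i g x := by
  funext x
  unfold Dd
  rw [fderiv_fun_add (hf x) (hg x)]
  simp

lemma Dd_comp {N : ℕ} {i : Fin N} {φ φ' : ℝ → ℝ} {h : Euc N → ℝ} (hφ : ∀ s, HasDerivAt φ (φ' s) s)
    (hh : Differentiable ℝ h) : Dd i (fun x => φ (h x)) = fun x => φ' (h x) * Dd i h x := by
  funext x
  unfold Dd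
  have := ((hφ (h x)).comp_hasFDerivAt x (hh x).hasFDerivAt).fderiv
  simp only [Function.comp_def] at this
  rw [this]
  simp

lemma DdDd_mul {N : ℕ} {i : Fin N} {f g : Euc N → ℝ} (hf : ContDiff ℝ 2 f)
    (hg : ContDiff ℝ 2 g) (x : Euc N) : Dd i (Dd i (fun x => f x * g x)) x =
      f x * Dd i (Dd i g) x + g x * Dd i (Dd i f) x + 2 * (Dd i f x * Dd i g x) := by
  have hf1 := hf.differentiable (by norm_num)
  have hg1 := hg.differentiable (by norm_num)
  have hf2 : Differentiable ℝ (Dd i f) := (Dd_contDiff (m := 1) hf (by norm_num)).differentiable (by norm_num)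
  have hg2 : Differentiable ℝ (Dd i g) := (Dd_contDiff (m := 1) hg (by norm_num)).differentiable (by norm_num)
  rw [Dd_mul hf1 hg1, Dd_add (hf1.fun_mul hg2) (hg1.fun_mul hf2), Dd_mul hf1 hg2, Dd_mul hg1 hf2]
  ring

lemma DdDd_comp {N : ℕ} {i : Fin N} {φ φ' φ'' : ℝ → ℝ} {h : Euc N → ℝ}
    (hφ : ∀ s, HasDerivAt φ (φ' s) s) (hφ' : ∀ s, HasDerivAt φ' (φ'' s) s)
    (hh : ContDiff ℝ 2 h) (x : Euc N) : Dd i (Dd i (fun x => φ (h x))) x =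
      φ' (h x) * Dd i (Dd i h) x + φ'' (h x) * (Dd i h x) ^ 2 := by
  have hh1 := hh.differentiable (by norm_num)
  have hh2 : Differentiable ℝ (Dd i h) := (Dd_contDiff (m := 1) hh (by norm_num)).differentiable (by norm_num)
  have hφd : Differentiable ℝ φ' := fun s => (hφ' s).differentiableAt
  rw [Dd_comp hφ hh1, Dd_mul (f := fun x => φ' (h x)) (hφd.comp hh1) hh2, Dd_comp hφ' hh1]
  ring

lemma maxpow_deriv {a : ℝ} (ha : 1 < a) (s : ℝ) :
    HasDerivAt (fun s : ℝ => (max s 0) ^ a) (a * (max s 0) ^ (a - 1)) s := by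
  rcases lt_trichotomy s 0 with h | h | h
  · rw [max_eq_right h.le, zero_rpow (by linarith), mul_zero]
    refine (hasDerivAt_const s (0:ℝ)).congr_of_eventuallyEq ?_
    filter_upwards [Iio_mem_nhds h] with y hy
    rw [max_eq_right (le_of_lt hy), zero_rpow (by linarith)]
  · subst h
    rw [max_self, zero_rpow (by linarith), mul_zero]
    have h0 : HasDerivAt (fun s : ℝ => s ^ a) 0 0 := by
      have := hasDerivAt_rpow_const (x := (0:ℝ)) (p := a) (Or.inr ha.le)
      rwa [zero_rpow (by linarith), mul_zero] at this
    rw [hasDerivAt_iff_isLittleO] at h0 ⊢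
    refine (Asymptotics.IsBigO.of_bound 1 ?_).trans_isLittleO
      (h0.comp_tendsto (k := fun s : ℝ => |s|) (by
        have : Tendsto (fun s : ℝ => |s|) (nhds 0) (nhds |0|) := continuous_abs.tendsto 0
        simpa using this)) |>.trans_isBigO (Asymptotics.IsBigO.of_bound 1 ?_)
    · filter_upwards with y
      simp only [max_self, zero_rpow (show a ≠ 0 by linarith), smul_zero, sub_zero, Function.comp_def, one_mul]
      rw [norm_of_nonneg (rpow_nonneg (le_max_right _ _) _), norm_of_nonneg (rpow_nonneg (abs_nonneg _) _)]
      exact rpow_le_rpow (le_max_right _ _) (max_le (le_abs_self _) (abs_nonneg _)) (by linarith)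
    · filter_upwards with y
      simp
  · rw [max_eq_left h.le]
    refine (hasDerivAt_rpow_const (x := s) (p := a) (Or.inr ha.le)).congr_of_eventuallyEq ?_
    filter_upwards [Ioi_mem_nhds h] with y hy
    rw [max_eq_left (le_of_lt hy)]

lemma maxpow_cont {a : ℝ} (ha : 0 ≤ a) : Continuous (fun s : ℝ => (max s 0) ^ a) :=
  (continuous_id.max continuous_const).rpow_const (fun _ => Or.inr ha)

lemma maxpow_contDiff {a : ℝ} (ha : 2 < a) : ContDiff ℝ 2 (fun s : ℝ => (max s 0) ^ a) := by
  have key : ∀ b : ℝ, 1 < b → deriv (fun s : ℝ => (max s 0) ^ b) = fun s => b * (max s 0) ^ (b - 1) :=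
    fun b hb => funext fun s => (maxpow_deriv hb s).deriv
  have c1 : ∀ b : ℝ, 1 < b → ContDiff ℝ 1 (fun s : ℝ => (max s 0) ^ b) := by
    intro b hb
    rw [contDiff_one_iff_deriv]
    refine ⟨fun s => (maxpow_deriv hb s).differentiableAt, ?_⟩
    rw [key b hb]
    exact continuous_const.mul (maxpow_cont (by linarith))
  rw [show (2 : WithTop ℕ∞) = 1 + 1 by norm_num, contDiff_succ_iff_deriv]
  refine ⟨fun s => (maxpow_deriv (by linarith) s).differentiableAt, by simp, ?_⟩
  rw [key a (by linarith)]
  exact contDiff_const.mul (c1 _ (by linarith))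

lemma ibp {N : ℕ} (i : Fin N) {f g : Euc N → ℝ} (hf : ContDiff ℝ 1 f) (hg : ContDiff ℝ 1 g)
    (hs : HasCompactSupport g) : ∫ x, f x * Dd i g x = - ∫ x, Dd i f x * g x := by
  have cf : Continuous (Dd i f) := (Dd_contDiff (m := 0) hf (by norm_num)).continuous
  have cg : Continuous (Dd i g) := (Dd_contDiff (m := 0) hg (by norm_num)).continuous
  refine integral_mul_fderiv_eq_neg_fderiv_mul_of_integrable ?_ ?_ ?_ ?_ ?_
  · exact (cf.mul hg.continuous).integrable_of_hasCompactSupport hs.mul_left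
  · exact (hf.continuous.mul cg).integrable_of_hasCompactSupport (Dd_supp hs).mul_left
  · exact (hf.continuous.mul hg.continuous).integrable_of_hasCompactSupport hs.mul_left
  · exact fun x _ => hf.differentiable (by norm_num) x
  · exact fun x _ => hg.differentiable (by norm_num) x

lemma ibp2 {N : ℕ} {f g : Euc N → ℝ} (hf : ContDiff ℝ 2 f) (hg : ContDiff ℝ 2 g)
    (hs : HasCompactSupport g) : ∫ x, lapl f x * g x = ∫ x, f x * lapl g x := by
  have cg : ∀ i, Continuous (Dd i (Dd i g)) := fun i =>
    (Dd_contDiff (m := 0) (Dd_contDiff (m := 1) hg (by norm_num)) (by norm_num)).continuous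
  have cf : ∀ i, Continuous (Dd i (Dd i f)) := fun i =>
    (Dd_contDiff (m := 0) (Dd_contDiff (m := 1) hf (by norm_num)) (by norm_num)).continuous
  simp only [lapl_eq, Finset.sum_mul, Finset.mul_sum]
  rw [integral_finsetSum, integral_finsetSum]
  · refine Finset.sum_congr rfl fun i _ => ?_
    have hg1 : ContDiff ℝ 1 (Dd i g) := Dd_contDiff hg (by norm_num)
    have hf1 : ContDiff ℝ 1 (Dd i f) := Dd_contDiff hf (by norm_num)
    have h1 := ibp i (hf.of_le (by norm_num)) hg1 (Dd_supp hs)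
    have h2 := ibp i hf1 (hg.of_le (by norm_num)) hs
    rw [h1, h2, neg_neg]
  · exact fun i _ => (hf.continuous.mul (cg i)).integrable_of_hasCompactSupport (Dd_supp (Dd_supp hs)).mul_left
  · exact fun i _ => ((cf i).mul hg.continuous).integrable_of_hasCompactSupport hs.mul_left

/-- differentiation under the integral sign, compact support -/
lemma deriv_int {N : ℕ} {F F' : ℝ → Euc N → ℝ} {k : Set (Euc N)} {J : Set ℝ} (hJ : IsOpen J)
    (hk : IsCompact k) (hF : ∀ s ∈ J, Continuous (F s))
    (hF0 : ∀ s ∈ J, ∀ y ∉ k, F s y = 0) (hF'0 : ∀ s ∈ J, ∀ y ∉ k, F' s y = 0)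
    (hd : ∀ s ∈ J, ∀ y, HasDerivAt (fun s => F s y) (F' s y) s)
    (hc : ContinuousOn (Function.uncurry F') (J ×ˢ univ)) {t : ℝ} (ht : t ∈ J) :
    HasDerivAt (fun s => ∫ y, F s y) (∫ y, F' t y) t := by
  obtain ⟨ε, hε, hb⟩ := Metric.nhds_basis_closedBall.mem_iff.1 (hJ.mem_nhds ht)
  obtain ⟨M, hM⟩ := ((isCompact_closedBall t ε).prod hk).exists_bound_of_continuousOn
    (hc.mono (Set.prod_mono hb (subset_univ _)))
  have hcs : ∀ s ∈ J, HasCompactSupport (F s) := fun s hs =>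
    HasCompactSupport.intro hk (fun y hy => hF0 s hs y hy)
  refine (hasDerivAt_integral_of_dominated_loc_of_deriv_le (s := closedBall t ε)
    (bound := k.indicator fun _ => M) (closedBall_mem_nhds t hε) ?_ ?_ ?_ ?_ ?_ ?_).2
  · filter_upwards [hJ.mem_nhds ht] with s hs using (hF s hs).aestronglyMeasurable
  · exact (hF t ht).integrable_of_hasCompactSupport (hcs t ht)
  · have : Continuous (F' t) := by
      rw [← continuousOn_univ]
      exact hc.comp (f := fun y => (t, y)) (by fun_prop) (fun y _ => ⟨ht, mem_univ _⟩)
    exact this.aestronglyMeasurable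
  · refine ae_of_all _ fun y s hs => ?_
    by_cases hy : y ∈ k
    · rw [indicator_of_mem hy]; exact hM (s, y) ⟨hs, hy⟩
    · rw [indicator_of_notMem hy, hF'0 s (hb hs) y hy, norm_zero]
  · exact (integrable_indicator_iff hk.measurableSet).2 (integrableOn_const hk.measure_lt_top.ne)
  · exact ae_of_all _ fun y s hs => hd s (hb hs) y

lemma young' {q : ℝ} (hq : 1 < q) {x z : ℝ} (hx : 0 ≤ x) (hz : 0 ≤ z) :
    x * z ≤ 1 / 4 * x ^ q + (4 * z) ^ (q / (q - 1)) := by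
  have hc : q.HolderConjugate (q / (q - 1)) := Real.HolderConjugate.conjExponent hq
  have h := Real.young_inequality_of_nonneg (a := x / 4) (b := 4 * z) (by positivity) (by positivity) hc
  have hq' : 1 < q / (q - 1) := hc.symm.lt
  have h1 : (x / 4) ^ q / q ≤ 1 / 4 * x ^ q := by
    rw [div_rpow hx (by norm_num)]
    have h4 : (4:ℝ) ≤ 4 ^ q := by
      conv_lhs => rw [← rpow_one 4]
      exact rpow_le_rpow_of_exponent_le (by norm_num) hq.le
    have : 0 ≤ x ^ q := rpow_nonneg hx q
    calc x ^ q / 4 ^ q / q ≤ x ^ q / 4 ^ q := div_le_self (by positivity) hq.le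
      _ ≤ x ^ q / 4 := by gcongr
      _ = _ := by ring
  have h2 : (4 * z) ^ (q / (q - 1)) / (q / (q - 1)) ≤ (4 * z) ^ (q / (q - 1)) :=
    div_le_self (by positivity) hq'.le
  linarith

end

section

/-- heat kernel -/
def Gk (N : ℕ) (t : ℝ) (z : Euc N) : ℝ :=
  (4 * π * t) ^ (-(N : ℝ) / 2) * Real.exp (-‖z‖ ^ 2 / (4 * t))

lemma hp_eq (N : ℕ) (η : Euc N → ℝ) (x : Euc N) (t : ℝ) :
    heatPot N η x t = ∫ y, Gk N t (x - y) * η y := rfl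

lemma Gk_pos (N : ℕ) {t : ℝ} (ht : 0 < t) (z : Euc N) : 0 < Gk N t z := by
  unfold Gk; positivity

lemma Gk_integral (N : ℕ) {t : ℝ} (ht : 0 < t) : ∫ z, Gk N t z = 1 := by
  unfold Gk
  rw [integral_const_mul]
  have := GaussianFourier.integral_rexp_neg_mul_sq_norm (V := Euc N) (b := 1 / (4 * t)) (by positivity)
  have e : ∀ z : Euc N, -‖z‖ ^ 2 / (4 * t) = -(1 / (4 * t)) * ‖z‖ ^ 2 := fun z => by ring
  simp only [e, this]
  rw [finrank_euclideanSpace_fin, show π / (1 / (4 * t)) = 4 * π * t by field_simp,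
    ← rpow_add (by positivity), show -(N : ℝ) / 2 + (N : ℝ) / 2 = 0 by ring, rpow_zero]

lemma Gk_integrable (N : ℕ) {t : ℝ} (ht : 0 < t) : Integrable (Gk N t) := by
  by_contra h
  have := integral_undef h
  rw [Gk_integral N ht] at this
  norm_num at this

lemma Gk_contDiff (N : ℕ) (n : WithTop ℕ∞) :
    ContDiffOn ℝ n (fun p : Euc N × ℝ => Gk N p.2 p.1) (univ ×ˢ Ioi 0) := by
  unfold Gk
  intro p hp
  have hp2 : 0 < p.2 := hp.2
  refine ContDiffAt.contDiffWithinAt ?_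
  have h1 : ContDiffAt ℝ n (fun p : Euc N × ℝ => 4 * π * p.2) p := by fun_prop
  have h2 : ContDiffAt ℝ n (fun p : Euc N × ℝ => 4 * p.2) p := by fun_prop
  have h3 : ContDiffAt ℝ n (fun p : Euc N × ℝ => -‖p.1‖ ^ 2) p := by
    exact (contDiff_fst.norm_sq ℝ).neg.contDiffAt
  exact (h1.rpow_const_of_ne (by positivity)).mul ((h3.div h2 (by positivity)).exp)

lemma Gk_contDiff_z (N : ℕ) (n : WithTop ℕ∞) {t : ℝ} (ht : 0 < t) : ContDiff ℝ n (Gk N t) := by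
  rw [← contDiffOn_univ]
  exact (Gk_contDiff N n).comp (f := fun z : Euc N => (z, t)) (by fun_prop) (fun z _ => ⟨mem_univ _, ht⟩)

lemma Dd_Gk (N : ℕ) {t : ℝ} (ht : 0 < t) (i : Fin N) :
    Dd i (Gk N t) = fun z => (-1 / (2 * t) * z i) * Gk N t z := by
  funext z
  unfold Dd
  have h1 : HasFDerivAt (fun z : Euc N => ‖z‖ ^ 2) (2 • innerSL ℝ z) z := (hasStrictFDerivAt_norm_sq z).hasFDerivAt
  have h2 : HasFDerivAt (Gk N t) _ z := ((h1.neg.mul_const (1 / (4 * t))).exp).const_mul ((4 * π * t) ^ (-(N : ℝ) / 2)) |>.congr_of_eventuallyEq (by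
    filter_upwards with y
    simp only [Gk]
    congr 2
    show _ = -(‖y‖ ^ 2) * (1 / (4 * t))
    ring)
  rw [h2.fderiv]
  simp [Gk, EuclideanSpace.inner_single_right]
  field_simp
  ring

lemma Dd_coord {N : ℕ} (i : Fin N) : Dd i (fun z : Euc N => z i) = fun _ => 1 := by
  funext z
  unfold Dd
  have : (fun z : Euc N => z i) = EuclideanSpace.proj (𝕜 := ℝ) i := rfl
  rw [this, ContinuousLinearMap.fderiv]
  simp

lemma lapl_Gk (N : ℕ) {t : ℝ} (ht : 0 < t) (z : Euc N) :
    lapl (Gk N t) z = (‖z‖ ^ 2 / (4 * t ^ 2) - N / (2 * t)) * Gk N t z := by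
  rw [lapl_eq]
  have hc : ∀ i : Fin N, Differentiable ℝ (fun z : Euc N => z i) := fun i =>
    (EuclideanSpace.proj (𝕜 := ℝ) i : Euc N →L[ℝ] ℝ).differentiable
  have key : ∀ i, Dd i (Dd i (Gk N t)) z = ((z i) ^ 2 / (4 * t ^ 2) - 1 / (2 * t)) * Gk N t z := by
    intro i
    rw [Dd_Gk N ht i, Dd_mul ((hc i).const_mul _) ((Gk_contDiff_z N 1 ht).differentiable (by norm_num)),
      Dd_mul (f := fun _ => -1 / (2 * t)) (by fun_prop) (hc i), Dd_coord, Dd_Gk N ht i]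
    have : Dd i (fun _ : Euc N => -1 / (2 * t)) = fun _ => 0 := by
      funext z; simp [Dd]
    rw [this]
    field_simp
    ring
  rw [Finset.sum_congr rfl (fun i _ => key i), ← Finset.sum_mul, Finset.sum_sub_distrib,
    ← Finset.sum_div, EuclideanSpace.norm_sq_eq]
  simp
  left; ring

lemma Gk_deriv_t (N : ℕ) {t : ℝ} (ht : 0 < t) (z : Euc N) :
    HasDerivAt (fun t => Gk N t z) ((‖z‖ ^ 2 / (4 * t ^ 2) - N / (2 * t)) * Gk N t z) t := by
  unfold Gk
  have h1 : HasDerivAt (fun t : ℝ => 4 * π * t) (4 * π) t := by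
    simpa using (hasDerivAt_id t).const_mul (4 * π)
  have h2 := h1.rpow_const (p := -(N : ℝ) / 2) (Or.inl (by positivity))
  have h3 : HasDerivAt (fun t : ℝ => -‖z‖ ^ 2 / (4 * t)) (‖z‖ ^ 2 / (4 * t ^ 2)) t := by
    have h4 : HasDerivAt (fun t : ℝ => 4 * t) 4 t := by
      simpa using (hasDerivAt_id t).const_mul 4
    refine ((hasDerivAt_const t (-‖z‖ ^ 2)).div h4 (by positivity)).congr_deriv ?_
    field_simp
    ring
  refine (h2.mul h3.exp).congr_deriv ?_
  rw [rpow_sub_one (by positivity)]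
  field_simp
  ring

lemma Gk_bounds (N : ℕ) : ∃ A : ℝ, 0 < A ∧ ∀ t : ℝ, 0 < t → ∀ z : Euc N,
    Gk N t z ≤ A * Gk N (2 * t) z ∧ ‖z‖ * Gk N t z ≤ A * √t * Gk N (2 * t) z ∧
    ‖z‖ ^ 2 * Gk N t z ≤ A * t * Gk N (2 * t) z := by
  refine ⟨9 * 2 ^ ((N : ℝ) / 2), by positivity, fun t ht z => ?_⟩
  have e1 : Gk N t z = 2 ^ ((N : ℝ) / 2) * Gk N (2 * t) z * rexp (-(‖z‖ ^ 2 / (8 * t))) := by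
    unfold Gk
    rw [show 4 * π * (2 * t) = 2 * (4 * π * t) by ring, mul_rpow (x := 2) (y := 4 * π * t) (by norm_num) (by positivity),
      show -‖z‖ ^ 2 / (4 * t) = -‖z‖ ^ 2 / (4 * (2 * t)) + -(‖z‖ ^ 2 / (8 * t)) by field_simp; ring,
      Real.exp_add]
    have : (2:ℝ) ^ ((N : ℝ) / 2) * 2 ^ (-(N : ℝ) / 2) = 1 := by
      rw [← rpow_add (by norm_num), show (N : ℝ) / 2 + -(N : ℝ) / 2 = 0 by ring, rpow_zero]
    linear_combination (-(4 * π * t) ^ (-(N : ℝ) / 2) * (rexp (-‖z‖ ^ 2 / (4 * (2 * t))) * rexp (-(‖z‖ ^ 2 / (8 * t))))) * this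
  have hB : 0 < 2 ^ ((N : ℝ) / 2) * Gk N (2 * t) z := mul_pos (by positivity) (Gk_pos N (by positivity) z)
  set B := 2 ^ ((N : ℝ) / 2) * Gk N (2 * t) z
  have hy : 0 ≤ ‖z‖ ^ 2 / (8 * t) := by positivity
  have hE : rexp (-(‖z‖ ^ 2 / (8 * t))) ≤ 1 := by rw [Real.exp_le_one_iff]; linarith
  have hE0 := Real.exp_pos (-(‖z‖ ^ 2 / (8 * t)))
  have hyE : ‖z‖ ^ 2 / (8 * t) * rexp (-(‖z‖ ^ 2 / (8 * t))) ≤ 1 := by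
    rw [Real.exp_neg, ← div_eq_mul_inv, div_le_one (Real.exp_pos _)]
    linarith [Real.add_one_le_exp (‖z‖ ^ 2 / (8 * t))]
  set E := rexp (-(‖z‖ ^ 2 / (8 * t)))
  have hyE2 : ‖z‖ ^ 2 * E ≤ 8 * t := by
    rw [div_mul_eq_mul_div, div_le_one (by positivity)] at hyE; exact hyE
  have hst : √t ^ 2 = t := Real.sq_sqrt ht.le
  have hst0 : 0 < √t := Real.sqrt_pos.2 ht
  have hyE1 : ‖z‖ * E ≤ 9 * √t := by
    have : ‖z‖ * √t ≤ ‖z‖ ^ 2 + √t ^ 2 := by nlinarith [sq_nonneg (‖z‖ - √t), norm_nonneg z]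
    have h2 : (‖z‖ * E) * √t ≤ (9 * √t) * √t := by nlinarith
    exact le_of_mul_le_mul_right h2 hst0
  rw [e1]
  refine ⟨?_, ?_, ?_⟩
  · calc B * E ≤ B * 9 := by gcongr; linarith
      _ = _ := by ring
  · calc ‖z‖ * (B * E) = B * (‖z‖ * E) := by ring
      _ ≤ B * (9 * √t) := by gcongr
      _ = _ := by ring
  · calc ‖z‖ ^ 2 * (B * E) = B * (‖z‖ ^ 2 * E) := by ring
      _ ≤ B * (9 * t) := mul_le_mul_of_nonneg_left (by linarith) hB.le
      _ = _ := by ring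

end

section
open scoped ContDiff Convolution

/-- smooth compactly supported -/
def SC {N : ℕ} (η : Euc N → ℝ) : Prop := ContDiff ℝ (⊤ : ℕ∞) η ∧ HasCompactSupport η

lemma SC.Dd {N : ℕ} {η : Euc N → ℝ} (h : SC η) (i : Fin N) : SC (Dd i η) :=
  ⟨Dd_contDiff h.1 (by simp), Dd_supp h.2⟩

lemma hp_contDiff {N : ℕ} {η : Euc N → ℝ} (h : SC η) :
    ContDiffOn ℝ (⊤ : ℕ∞) (fun p : Euc N × ℝ => heatPot N η p.1 p.2) (univ ×ˢ Ioi 0) := by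
  have hk : IsCompact (-(tsupport η)) := IsCompact.neg h.2
  have := contDiffOn_convolution_right_with_param_comp (𝕜 := ℝ) (μ := (volume : Measure (Euc N)))
    (n := (⊤ : ℕ∞)) (ContinuousLinearMap.mul ℝ ℝ)
    (s := (univ : Set (Euc N)) ×ˢ Ioi (0:ℝ)) (v := fun _ => (0 : Euc N)) contDiffOn_const
    (f := fun _ => (1:ℝ)) (g := fun p y => Gk N p.2 (p.1 + y) * η (-y)) (k := -(tsupport η))
    (isOpen_univ.prod isOpen_Ioi) hk ?_ (locallyIntegrable_const 1) ?_
  · refine this.congr fun p hp => ?_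
    rw [hp_eq, convolution]
    simp [sub_eq_add_neg]
  · intro p y hp hy
    have : η (-y) = 0 := image_eq_zero_of_notMem_tsupport (by simpa using hy)
    simp only [this, mul_zero]
  · refine ContDiffOn.mul ?_ ?_
    · exact (Gk_contDiff N (⊤ : ℕ∞)).comp
        (f := fun q : (Euc N × ℝ) × Euc N => (q.1.1 + q.2, q.1.2)) (by fun_prop)
        (fun q hq => ⟨mem_univ _, hq.1.2⟩)
    · exact (h.1.comp (contDiff_snd.neg)).contDiffOn

lemma hp_contDiff_x {N : ℕ} {η : Euc N → ℝ} (h : SC η) {t : ℝ} (ht : 0 < t) :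
    ContDiff ℝ (⊤ : ℕ∞) (fun x => heatPot N η x t) := by
  rw [← contDiffOn_univ]
  exact (hp_contDiff h).comp (f := fun z : Euc N => (z, t)) (by fun_prop) (fun z _ => ⟨mem_univ _, ht⟩)

lemma Dd_line {N : ℕ} {f : Euc N → ℝ} {x : Euc N} (hf : DifferentiableAt ℝ f x) (i : Fin N) :
    HasDerivAt (fun s : ℝ => f (x + s • EuclideanSpace.single i 1)) (Dd i f x) 0 := by
  have h1 : HasDerivAt (fun s : ℝ => x + s • (EuclideanSpace.single i 1 : Euc N)) (EuclideanSpace.single i 1) 0 := by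
    simpa using ((hasDerivAt_id (0:ℝ)).smul_const (EuclideanSpace.single i 1 : Euc N)).const_add x
  have h2 : HasFDerivAt f (fderiv ℝ f x) (x + (0:ℝ) • (EuclideanSpace.single i 1 : Euc N)) := by
    simpa using hf.hasFDerivAt
  exact h2.comp_hasDerivAt (0:ℝ) h1

lemma hp_Dd {N : ℕ} {η : Euc N → ℝ} (h : SC η) {t : ℝ} (ht : 0 < t) (i : Fin N) (x : Euc N) :
    Dd i (fun x => heatPot N η x t) x = ∫ y, Dd i (Gk N t) (x - y) * η y := by
  have h1 := Dd_line ((hp_contDiff_x h ht).differentiable (by simp) x) i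
  have hG := Gk_contDiff_z N 1 ht
  have hGd := hG.differentiable (by norm_num)
  have cG : Continuous (Dd i (Gk N t)) := (Dd_contDiff (m := 0) hG (by norm_num)).continuous
  have h2 := deriv_int (N := N) (J := univ) (k := tsupport η)
    (F := fun s y => Gk N t (x + s • EuclideanSpace.single i 1 - y) * η y)
    (F' := fun s y => Dd i (Gk N t) (x + s • EuclideanSpace.single i 1 - y) * η y) isOpen_univ h.2
    (fun s _ => by have := hG.continuous; have := h.1.continuous; fun_prop)
    (fun s _ y hy => by simp [image_eq_zero_of_notMem_tsupport hy])
    (fun s _ y hy => by simp [image_eq_zero_of_notMem_tsupport hy])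
    (fun s _ y => by
      refine HasDerivAt.mul_const ?_ (η y)
      have := Dd_line (hGd (x + s • EuclideanSpace.single i 1 - y)) i
      have h3 : HasDerivAt (fun s' : ℝ => s' - s) 1 s := (hasDerivAt_id s).sub_const s
      have h4 := HasDerivAt.scomp_of_eq s this h3 (by simp)
      simp only [one_smul, Function.comp_def] at h4
      refine h4.congr_of_eventuallyEq ?_
      filter_upwards with r
      congr 1
      rw [sub_smul]; abel)
    (by have := h.1.continuous; exact Continuous.continuousOn (by unfold Function.uncurry; fun_prop))
    (t := 0) (mem_univ _)
  have h3 := h1.unique h2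
  simpa using h3

lemma Dd_refl {N : ℕ} {f : Euc N → ℝ} (hf : Differentiable ℝ f) (i : Fin N) (x : Euc N) :
    Dd i (fun y => f (x - y)) = fun y => -Dd i f (x - y) := by
  funext y
  unfold Dd
  have h1 : HasFDerivAt (fun y : Euc N => x - y) (-(ContinuousLinearMap.id ℝ (Euc N))) y :=
    (hasFDerivAt_id y).const_sub x
  have := ((hf (x - y)).hasFDerivAt.comp y h1).fderiv
  simp only [Function.comp_def] at this
  rw [this]; simp

lemma hp_Dd' {N : ℕ} {η : Euc N → ℝ} (h : SC η) {t : ℝ} (ht : 0 < t) (i : Fin N) (x : Euc N) :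
    Dd i (fun x => heatPot N η x t) x = heatPot N (Dd i η) x t := by
  have hG := Gk_contDiff_z N 1 ht
  rw [hp_Dd h ht, hp_eq]
  have h1 := ibp i (f := fun y => Gk N t (x - y)) (hG.comp (by fun_prop)) (h.1.of_le (by simp)) h.2
  rw [h1, Dd_refl (hG.differentiable (by norm_num)), ← integral_neg]
  simp

lemma hp_lapl {N : ℕ} {η : Euc N → ℝ} (h : SC η) {t : ℝ} (ht : 0 < t) (x : Euc N) :
    lapl (fun x => heatPot N η x t) x = heatPot N (lapl η) x t := by
  have hG := Gk_contDiff_z N 1 ht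
  rw [lapl_eq, hp_eq]
  have : ∀ i, Dd i (Dd i (fun x => heatPot N η x t)) x = heatPot N (Dd i (Dd i η)) x t := by
    intro i
    rw [show Dd i (fun x => heatPot N η x t) = _ from funext fun x => hp_Dd' h ht i x]
    exact hp_Dd' (h.Dd i) ht i x
  rw [Finset.sum_congr rfl (fun i _ => this i)]
  simp only [hp_eq, lapl_eq, Finset.mul_sum]
  rw [integral_finsetSum]
  intro i _
  have c1 := ((h.Dd i).Dd i).1.continuous
  have c2 := hG.continuous
  exact Continuous.integrable_of_hasCompactSupport (by fun_prop) (((h.Dd i).Dd i).2.mul_left)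

lemma hp_dt {N : ℕ} {η : Euc N → ℝ} (h : SC η) {t : ℝ} (ht : 0 < t) (x : Euc N) :
    HasDerivAt (fun t => heatPot N η x t) (∫ y, lapl (Gk N t) (x - y) * η y) t := by
  have := deriv_int (N := N) (J := Ioi 0) (k := tsupport η)
    (F := fun s y => Gk N s (x - y) * η y)
    (F' := fun s y => lapl (Gk N s) (x - y) * η y) isOpen_Ioi h.2
    (fun s hs => by have := (Gk_contDiff_z N 1 hs).continuous; have := h.1.continuous; fun_prop)
    (fun s _ y hy => by simp [image_eq_zero_of_notMem_tsupport hy])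
    (fun s _ y hy => by simp [image_eq_zero_of_notMem_tsupport hy])
    (fun s hs y => by
      rw [lapl_Gk N hs]
      exact (Gk_deriv_t N hs _).mul_const (η y))
    (by
      refine ContinuousOn.mul ?_ (h.1.continuous.comp continuous_snd).continuousOn
      have hc : ContinuousOn (fun p : ℝ × Euc N => (‖x - p.2‖ ^ 2 / (4 * p.1 ^ 2) - N / (2 * p.1)) * Gk N p.1 (x - p.2)) (Ioi 0 ×ˢ univ) := by
        refine ContinuousOn.mul (ContinuousOn.sub (ContinuousOn.div ?_ ?_ ?_) (ContinuousOn.div ?_ ?_ ?_)) ?_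
        · fun_prop
        · fun_prop
        · intro p hp; have : 0 < p.1 := hp.1; positivity
        · fun_prop
        · fun_prop
        · intro p hp; have : 0 < p.1 := hp.1; positivity
        · exact (Gk_contDiff N 0).continuousOn.comp (f := fun p : ℝ × Euc N => (x - p.2, p.1)) (by fun_prop)
            (fun p hp => ⟨mem_univ _, hp.1⟩)
      exact hc.congr fun p hp => lapl_Gk N hp.1 _)
    (t := t) ht
  exact this

lemma hp_dt' {N : ℕ} {η : Euc N → ℝ} (h : SC η) {t : ℝ} (ht : 0 < t) (x : Euc N) :
    deriv (fun t => heatPot N η x t) t = heatPot N (lapl η) x t := by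
  have hG := Gk_contDiff_z N 2 ht
  have hd := hG.differentiable (by norm_num)
  rw [(hp_dt h ht x).deriv, hp_eq]
  have h1 := ibp2 (f := fun y => Gk N t (x - y)) (hG.comp (by fun_prop)) (h.1.of_le (WithTop.coe_le_coe.2 (le_top : (2:ℕ∞) ≤ ⊤))) h.2
  rw [← h1]
  congr 1
  funext y
  congr 1
  rw [lapl_eq, lapl_eq]
  refine Finset.sum_congr rfl fun i _ => ?_
  have h2 : Differentiable ℝ (Dd i (Gk N t)) := (Dd_contDiff (m := 1) hG (by norm_num)).differentiable (by norm_num)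
  rw [Dd_refl hd]
  have h3 := congrFun (Dd_refl h2 i x) y
  have h4 : ∀ f : Euc N → ℝ, Dd i (fun y => -f y) y = - Dd i f y := by
    intro f; unfold Dd
    rw [fderiv_fun_neg]; simp
  rw [h4, h3, neg_neg]

end

section
open scoped ContDiff Convolution

lemma part_x {N : ℕ} {V : Euc N → ℝ → ℝ}
    (hV : ContDiffOn ℝ 1 (fun p : Euc N × ℝ => V p.1 p.2) (univ ×ˢ Ioi 0)) {t : ℝ} (ht : 0 < t)
    (x : Euc N) : fderiv ℝ (fun y => V y t) x =
      (fderiv ℝ (fun p : Euc N × ℝ => V p.1 p.2) (x, t)).comp (ContinuousLinearMap.inl ℝ (Euc N) ℝ) := by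
  have hd : DifferentiableAt ℝ (fun p : Euc N × ℝ => V p.1 p.2) (x, t) :=
    (hV.differentiableOn (by norm_num)).differentiableAt ((isOpen_univ.prod isOpen_Ioi).mem_nhds ⟨mem_univ _, ht⟩)
  exact (hd.hasFDerivAt.comp (f := fun y => (y, t)) x (hasFDerivAt_prodMk_left x t)).fderiv

lemma part_t {N : ℕ} {V : Euc N → ℝ → ℝ}
    (hV : ContDiffOn ℝ 1 (fun p : Euc N × ℝ => V p.1 p.2) (univ ×ˢ Ioi 0)) {t : ℝ} (ht : 0 < t)
    (x : Euc N) : HasDerivAt (V x)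
      (fderiv ℝ (fun p : Euc N × ℝ => V p.1 p.2) (x, t) (0, 1)) t := by
  have hd : DifferentiableAt ℝ (fun p : Euc N × ℝ => V p.1 p.2) (x, t) :=
    (hV.differentiableOn (by norm_num)).differentiableAt ((isOpen_univ.prod isOpen_Ioi).mem_nhds ⟨mem_univ _, ht⟩)
  have h1 : HasDerivAt (fun τ : ℝ => (x, τ)) ((0 : Euc N), (1:ℝ)) t :=
    (hasDerivAt_const t x).prodMk (hasDerivAt_id t)
  exact hd.hasFDerivAt.comp_hasDerivAt t h1

lemma part_cont {N : ℕ} {V : Euc N → ℝ → ℝ}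
    (hV : ContDiffOn ℝ 1 (fun p : Euc N × ℝ => V p.1 p.2) (univ ×ˢ Ioi 0)) :
    ContinuousOn (fderiv ℝ (fun p : Euc N × ℝ => V p.1 p.2)) (univ ×ˢ Ioi 0) :=
  hV.continuousOn_fderiv_of_isOpen (isOpen_univ.prod isOpen_Ioi) (by norm_num)

/-- the integrand R -/
def Rf (N : ℕ) (η : Euc N → ℝ) (x : Euc N) (t : ℝ) : ℝ :=
  ‖fderiv ℝ (fun y => heatPot N η y t) x‖ ^ 2 + |deriv (fun τ => heatPot N η x τ) t|

lemma Rf_nonneg (N : ℕ) (η : Euc N → ℝ) (x : Euc N) (t : ℝ) : 0 ≤ Rf N η x t := by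
  unfold Rf; positivity

lemma deriv_cont {N : ℕ} {V : Euc N → ℝ → ℝ}
    (hV : ContDiffOn ℝ 1 (fun p : Euc N × ℝ => V p.1 p.2) (univ ×ˢ Ioi 0)) :
    ContinuousOn (fun p : Euc N × ℝ => deriv (V p.1) p.2) (univ ×ˢ Ioi 0) := by
  refine ((part_cont hV).clm_apply (continuousOn_const (c := ((0 : Euc N), (1:ℝ))))).congr ?_
  intro p hp
  exact (part_t hV hp.2 p.1).deriv

lemma Rf_cont {N : ℕ} {η : Euc N → ℝ} (h : SC η) :
    ContinuousOn (fun p : Euc N × ℝ => Rf N η p.1 p.2) (univ ×ˢ Ioi 0) := by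
  have hV := (hp_contDiff h).of_le (m := 1) (by simp)
  refine ContinuousOn.add (ContinuousOn.pow (ContinuousOn.norm ?_) 2) (ContinuousOn.abs (deriv_cont hV))
  refine ((part_cont hV).clm_comp (continuousOn_const (c := ContinuousLinearMap.inl ℝ (Euc N) ℝ))).congr ?_
  intro p hp
  exact part_x hV hp.2 p.1

lemma Gk_sub_integrable (N : ℕ) {t : ℝ} (ht : 0 < t) (x : Euc N) :
    Integrable (fun y => Gk N t (x - y)) := (Gk_integrable N ht).comp_sub_left x

lemma Gk_sub_integral (N : ℕ) {t : ℝ} (ht : 0 < t) (x : Euc N) : ∫ y, Gk N t (x - y) = 1 := by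
  rw [integral_sub_left_eq_self (fun y => Gk N t y) volume x, Gk_integral N ht]

/-- indicator one function -/
def ind {N : ℕ} (S : Set (Euc N)) : Euc N → ℝ := S.indicator fun _ => 1

lemma ind_nonneg {N : ℕ} (S : Set (Euc N)) (y : Euc N) : 0 ≤ ind S y :=
  indicator_nonneg (fun _ _ => zero_le_one) y

lemma ind_le {N : ℕ} (S : Set (Euc N)) (y : Euc N) : ind S y ≤ 1 :=
  indicator_le_self' (fun _ _ => zero_le_one) y

lemma hp_ind_integrable {N : ℕ} {S : Set (Euc N)} (hS : MeasurableSet S) {t : ℝ} (ht : 0 < t)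
    (x : Euc N) : Integrable (fun y => Gk N t (x - y) * ind S y) := by
  have := (Gk_sub_integrable N ht x).indicator hS
  refine this.congr (ae_of_all _ fun y => ?_)
  by_cases hy : y ∈ S <;> simp [ind, hy]

lemma hp_mem {N : ℕ} {η : Euc N → ℝ} (h0 : ∀ x, 0 ≤ η x) (h1 : ∀ x, η x ≤ 1) {t : ℝ} (ht : 0 < t)
    (x : Euc N) : 0 ≤ heatPot N η x t ∧ heatPot N η x t ≤ 1 := by
  rw [hp_eq]
  refine ⟨integral_nonneg fun y => mul_nonneg (Gk_pos N ht _).le (h0 y), ?_⟩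
  rw [← Gk_sub_integral N ht x]
  refine integral_mono_of_nonneg (ae_of_all _ fun y => mul_nonneg (Gk_pos N ht _).le (h0 y))
    (Gk_sub_integrable N ht x) (ae_of_all _ fun y => ?_)
  exact mul_le_of_le_one_right (Gk_pos N ht _).le (h1 y)

lemma hp_ind_int {N : ℕ} {S : Set (Euc N)} (hS : IsCompact S) {t : ℝ} (ht : 0 < t) :
    Integrable (fun x => heatPot N (ind S) x t) ∧ ∫ x, heatPot N (ind S) x t = ∫ x, ind S x := by
  have i1 : Integrable (ind S) :=
    (integrable_indicator_iff hS.measurableSet).2 (integrableOn_const hS.measure_lt_top.ne)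
  have e : (fun x => heatPot N (ind S) x t) = (ind S) ⋆[ContinuousLinearMap.mul ℝ ℝ, volume] (Gk N t) := by
    funext x
    rw [hp_eq, convolution]
    congr 1
    funext y
    simp [mul_comm]
  rw [e]
  refine ⟨i1.integrable_convolution _ (Gk_integrable N ht), ?_⟩
  rw [integral_convolution _ i1 (Gk_integrable N ht), Gk_integral N ht]
  simp

lemma ker_bound {N : ℕ} {S : Set (Euc N)} (hS : MeasurableSet S) {t : ℝ} (ht : 0 < t) (x : Euc N)
    {F : Euc N → ℝ} {B : ℝ} (h : ∀ y, |F y| ≤ B * (Gk N t (x - y) * ind S y)) :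
    |∫ y, F y| ≤ B * heatPot N (ind S) x t := by
  rw [hp_eq, ← integral_const_mul, ← Real.norm_eq_abs]
  exact norm_integral_le_of_norm_le ((hp_ind_integrable hS ht x).const_mul B)
    (ae_of_all _ fun y => h y)

lemma fderiv_norm_le {N : ℕ} (L : Euc N →L[ℝ] ℝ) {B : ℝ} (hB : 0 ≤ B)
    (h : ∀ i, |L (EuclideanSpace.single i 1)| ≤ B) : ‖L‖ ≤ N * B := by
  refine L.opNorm_le_bound (by positivity) fun v => ?_
  have hv : v = ∑ i, v i • (EuclideanSpace.single i 1 : Euc N) := by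
    have := (EuclideanSpace.basisFun (Fin N) ℝ).sum_repr v
    simpa using this.symm
  have e : L v = ∑ i, v i * L (EuclideanSpace.single i 1) := by
    conv_lhs => rw [hv]
    simp
  rw [e]
  calc ‖∑ i, v i * L (EuclideanSpace.single i 1)‖ ≤ ∑ i : Fin N, ‖v i * L (EuclideanSpace.single i 1)‖ :=
        norm_sum_le _ _
    _ ≤ ∑ i : Fin N, ‖v‖ * B := by
        refine Finset.sum_le_sum fun i _ => ?_
        rw [norm_mul]
        exact mul_le_mul (PiLp.norm_apply_le v i) (h i) (norm_nonneg _) (norm_nonneg _)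
    _ = N * B * ‖v‖ := by simp; ring

lemma bound_ind {N : ℕ} {f : Euc N → ℝ} {S : Set (Euc N)} (hf : Continuous f) (hs : IsCompact S)
    (h0 : ∀ y ∉ S, f y = 0) : ∃ D, 0 ≤ D ∧ ∀ y, |f y| ≤ D * ind S y := by
  obtain ⟨D, hD⟩ := hs.exists_bound_of_continuousOn hf.continuousOn
  refine ⟨|D|, abs_nonneg D, fun y => ?_⟩
  by_cases hy : y ∈ S
  · simp only [ind, hy, indicator_of_mem, mul_one]; exact (hD y hy).trans (le_abs_self D)
  · simp [ind, hy, h0 y hy]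

lemma Dd_zero_out {N : ℕ} {η : Euc N → ℝ} (i : Fin N) (y : Euc N) (hy : y ∉ tsupport η) :
    Dd i η y = 0 := by
  have : fderiv ℝ η y = 0 := by
    by_contra h
    exact hy (support_fderiv_subset ℝ (Function.mem_support.2 h))
  simp [Dd, this]

lemma tsupport_Dd {N : ℕ} {η : Euc N → ℝ} (i : Fin N) : tsupport (Dd i η) ⊆ tsupport η :=
  closure_minimal (fun y hy => by
    by_contra h; exact hy (Dd_zero_out i y h)) (isClosed_tsupport η)

lemma Rf_bound {N : ℕ} {η : Euc N → ℝ} (h : SC η) (h0 : ∀ x, 0 ≤ η x) (h1 : ∀ x, η x ≤ 1) :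
    ∃ C, 0 ≤ C ∧ ∀ t, 0 < t → ∀ x,
      (t ≤ 1 → Rf N η x t ≤ C * heatPot N (ind (tsupport η)) x t) ∧
      (1 ≤ t → Rf N η x t ≤ C * t⁻¹ * heatPot N (ind (tsupport η)) x (2 * t)) := by
  set S := tsupport η with hSdef
  have hS : IsCompact S := h.2
  have hSm := hS.measurableSet
  choose D hD0 hD using fun i => bound_ind (h.Dd i).1.continuous hS (fun y hy => Dd_zero_out i y hy)
  have clap : Continuous (lapl η) := by
    show Continuous fun x => ∑ i, Dd i (Dd i η) x
    exact continuous_finsetSum _ fun i _ => ((h.Dd i).Dd i).1.continuous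
  obtain ⟨D', hD'0, hD'⟩ := bound_ind clap hS (fun y hy => by
    rw [lapl_eq]
    exact Finset.sum_eq_zero fun i _ => Dd_zero_out i y (fun hh => hy (tsupport_Dd i hh)))
  obtain ⟨A, hA, hG⟩ := Gk_bounds N
  set E := ∑ i, D i with hE
  have hE0 : 0 ≤ E := Finset.sum_nonneg fun i _ => hD0 i
  have hη : ∀ y, |η y| ≤ ind S y := fun y => by
    by_cases hy : y ∈ S
    · simp only [ind, hy, indicator_of_mem, abs_of_nonneg (h0 y)]; exact h1 y
    · simp [ind, hy, image_eq_zero_of_notMem_tsupport hy]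
  have sq_le : ∀ (a B f : ℝ), 0 ≤ a → 0 ≤ f → f ≤ 1 → a ≤ B * f → a ^ 2 ≤ B ^ 2 * f := by
    intro a B f ha hf hf1 hab
    calc a ^ 2 ≤ (B * f) ^ 2 := pow_le_pow_left₀ ha hab 2
      _ = B ^ 2 * (f * f) := by ring
      _ ≤ B ^ 2 * f := by gcongr; nlinarith
  refine ⟨((N * E) ^ 2 + D') + ((N * A) ^ 2 + A * (1 + N)), by positivity, fun t ht x => ⟨fun _ => ?_, fun h1t => ?_⟩⟩
  · obtain ⟨f0, f1⟩ := hp_mem (ind_nonneg S) (ind_le S) ht x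
    set f := heatPot N (ind S) x t
    have k1 : ∀ ψ : Euc N → ℝ, ∀ B, (∀ y, |ψ y| ≤ B * ind S y) → |heatPot N ψ x t| ≤ B * f := by
      intro ψ B hB
      rw [hp_eq]
      refine ker_bound hSm ht x fun y => ?_
      rw [abs_mul, abs_of_pos (Gk_pos N ht _)]
      calc Gk N t (x - y) * |ψ y| ≤ Gk N t (x - y) * (B * ind S y) :=
            mul_le_mul_of_nonneg_left (hB y) (Gk_pos N ht _).le
        _ = _ := by ring
    have g1 : ‖fderiv ℝ (fun y => heatPot N η y t) x‖ ≤ N * E * f := by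
      rw [mul_assoc]
      refine fderiv_norm_le _ (by positivity) fun i => ?_
      have := hp_Dd' h ht i x
      unfold Dd at this
      rw [this]
      refine (k1 _ _ (hD i)).trans ?_
      gcongr
      exact Finset.single_le_sum (f := D) (fun i _ => hD0 i) (Finset.mem_univ i)
    have g2 : |deriv (fun τ => heatPot N η x τ) t| ≤ D' * f := by
      rw [hp_dt' h ht x]; exact k1 _ _ hD'
    have g3 := sq_le _ _ _ (norm_nonneg _) f0 f1 g1
    unfold Rf
    have : 0 ≤ ((N * A) ^ 2 + A * (1 + N)) * f := by positivity
    linarith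
  · have h2t : 0 < 2 * t := by positivity
    obtain ⟨f0, f1⟩ := hp_mem (ind_nonneg S) (ind_le S) h2t x
    set f := heatPot N (ind S) x (2 * t)
    have k1 : ∀ k : Euc N → ℝ, ∀ B, (∀ z, |k z| ≤ B * Gk N (2 * t) z) →
        |∫ y, k (x - y) * η y| ≤ B * f := by
      intro k B hB
      refine ker_bound hSm h2t x fun y => ?_
      rw [abs_mul, ← mul_assoc]
      exact mul_le_mul (hB _) (hη y) (abs_nonneg _) ((abs_nonneg _).trans (hB _))
    have hst : √t ^ 2 = t := Real.sq_sqrt ht.le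
    have g1 : ‖fderiv ℝ (fun y => heatPot N η y t) x‖ ≤ N * (A * √t / t) * f := by
      rw [mul_assoc]
      refine fderiv_norm_le _ (by positivity) fun i => ?_
      have := hp_Dd h ht i x
      unfold Dd at this
      rw [this]
      refine k1 (fun z => fderiv ℝ (Gk N t) z (EuclideanSpace.single i 1)) _ fun z => ?_
      have e := congrFun (Dd_Gk N ht i) z
      unfold Dd at e
      show |fderiv ℝ (Gk N t) z (EuclideanSpace.single i 1)| ≤ _
      rw [e, abs_mul, abs_mul, abs_of_pos (Gk_pos N ht _), abs_div, abs_neg, abs_one,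
        abs_of_pos (show 0 < 2 * t by positivity)]
      have hz : |z i| ≤ ‖z‖ := PiLp.norm_apply_le z i
      have hb := (hG t ht z).2.1
      have hp := Gk_pos N ht z
      calc 1 / (2 * t) * |z i| * Gk N t z ≤ 1 / t * ‖z‖ * Gk N t z := by
            gcongr
            linarith
        _ = (‖z‖ * Gk N t z) / t := by ring
        _ ≤ (A * √t * Gk N (2 * t) z) / t := by gcongr
        _ = _ := by ring
    have g2 : |deriv (fun τ => heatPot N η x τ) t| ≤ A * (1 + N) / t * f := by
      rw [(hp_dt h ht x).deriv]
      refine k1 _ _ fun z => ?_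
      rw [lapl_Gk N ht, sub_mul]
      have hp := Gk_pos N ht z
      have hp2 := Gk_pos N h2t z
      have b1 := (hG t ht z).1
      have b3 := (hG t ht z).2.2
      calc |‖z‖ ^ 2 / (4 * t ^ 2) * Gk N t z - N / (2 * t) * Gk N t z|
          ≤ |‖z‖ ^ 2 / (4 * t ^ 2) * Gk N t z| + |N / (2 * t) * Gk N t z| := abs_sub _ _
        _ = (‖z‖ ^ 2 * Gk N t z) / (4 * t ^ 2) + N / (2 * t) * Gk N t z := by
            rw [abs_of_nonneg (by positivity), abs_of_nonneg (by positivity)]; ring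
        _ ≤ (A * t * Gk N (2 * t) z) / (1 * t ^ 2) + N / (1 * t) * (A * Gk N (2 * t) z) := by
            gcongr <;> norm_num
        _ = _ := by field_simp
    have g3 := sq_le _ _ _ (norm_nonneg _) f0 f1 g1
    have e : (N * (A * √t / t)) ^ 2 = (N * A) ^ 2 * t⁻¹ := by
      rw [mul_pow, div_pow, mul_pow, hst]; field_simp
    rw [e] at g3
    unfold Rf
    have : 0 ≤ ((N * E) ^ 2 + D') * t⁻¹ * f := by positivity
    rw [div_eq_mul_inv] at g2
    linarith

lemma Rf_integrable {N : ℕ} {q' : ℝ} (hq : 1 < q') {η : Euc N → ℝ} (h : SC η) (h0 : ∀ x, 0 ≤ η x)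
    (h1 : ∀ x, η x ≤ 1) : (∀ t, 0 < t → Integrable (fun x => Rf N η x t ^ q')) ∧
      IntegrableOn (fun t => ∫ x, Rf N η x t ^ q') (Ioi 0) := by
  obtain ⟨C, hC, hb⟩ := Rf_bound h h0 h1
  set S := tsupport η with hSdef
  have hS : IsCompact S := h.2
  have cont : ContinuousOn (fun p : Euc N × ℝ => Rf N η p.1 p.2 ^ q') (univ ×ˢ Ioi 0) :=
    (Rf_cont h).rpow_const (fun _ _ => Or.inr (by linarith))
  have contx : ∀ t, 0 < t → Continuous (fun x => Rf N η x t ^ q') := fun t ht => by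
    rw [← continuousOn_univ]
    exact cont.comp (f := fun x : Euc N => (x, t)) (by fun_prop) (fun z _ => ⟨mem_univ _, ht⟩)
  have pw : ∀ R c f : ℝ, 0 ≤ R → 0 ≤ c → 0 ≤ f → f ≤ 1 → R ≤ c * f → R ^ q' ≤ c ^ q' * f := by
    intro R c f hR hc hf hf1 hRc
    calc R ^ q' ≤ (c * f) ^ q' := rpow_le_rpow hR hRc (by linarith)
      _ = c ^ q' * f ^ q' := mul_rpow hc hf
      _ ≤ c ^ q' * f := by
        gcongr
        calc f ^ q' ≤ f ^ (1:ℝ) := rpow_le_rpow_of_exponent_ge' hf hf1 (by norm_num) hq.le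
          _ = f := rpow_one f
  set V := ∫ x, ind S x
  have hV : 0 ≤ V := integral_nonneg (ind_nonneg S)
  have A1 : ∀ t, 0 < t → t ≤ 1 → Integrable (fun x => Rf N η x t ^ q') ∧ ∫ x, Rf N η x t ^ q' ≤ C ^ q' * V := by
    intro t ht ht1
    have hi := hp_ind_int hS ht
    have hle : ∀ x, Rf N η x t ^ q' ≤ C ^ q' * heatPot N (ind S) x t := fun x =>
      pw _ _ _ (Rf_nonneg _ _ _ _) hC (hp_mem (ind_nonneg S) (ind_le S) ht x).1
        (hp_mem (ind_nonneg S) (ind_le S) ht x).2 ((hb t ht x).1 ht1)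
    have hI : Integrable (fun x => Rf N η x t ^ q') := (hi.1.const_mul (C ^ q')).mono' (contx t ht).aestronglyMeasurable
      (ae_of_all _ fun x => by
        rw [norm_of_nonneg (rpow_nonneg (Rf_nonneg _ _ _ _) _)]; exact hle x)
    refine ⟨hI, ?_⟩
    rw [show V = _ from hi.2.symm, ← integral_const_mul]
    exact integral_mono hI (hi.1.const_mul _) hle
  have A2 : ∀ t, 0 < t → 1 ≤ t → Integrable (fun x => Rf N η x t ^ q') ∧ ∫ x, Rf N η x t ^ q' ≤ C ^ q' * V * t ^ (-q') := by
    intro t ht ht1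
    have hi := hp_ind_int hS (show 0 < 2 * t by positivity)
    have hle : ∀ x, Rf N η x t ^ q' ≤ (C * t⁻¹) ^ q' * heatPot N (ind S) x (2 * t) := fun x =>
      pw _ _ _ (Rf_nonneg _ _ _ _) (by positivity) (hp_mem (ind_nonneg S) (ind_le S) (by positivity) x).1
        (hp_mem (ind_nonneg S) (ind_le S) (by positivity) x).2 ((hb t ht x).2 ht1)
    have hI : Integrable (fun x => Rf N η x t ^ q') := (hi.1.const_mul ((C * t⁻¹) ^ q')).mono' (contx t ht).aestronglyMeasurable
      (ae_of_all _ fun x => by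
        rw [norm_of_nonneg (rpow_nonneg (Rf_nonneg _ _ _ _) _)]; exact hle x)
    refine ⟨hI, ?_⟩
    have e : C ^ q' * V * t ^ (-q') = (C * t⁻¹) ^ q' * V := by
      rw [mul_rpow hC (by positivity), inv_rpow ht.le, rpow_neg ht.le]; ring
    rw [e, show V = _ from hi.2.symm, ← integral_const_mul]
    exact integral_mono hI (hi.1.const_mul _) hle
  refine ⟨fun t ht => ?_, ?_⟩
  · rcases le_total t 1 with h' | h'
    · exact (A1 t ht h').1
    · exact (A2 t ht h').1
  have meas : AEStronglyMeasurable (fun t => ∫ x, Rf N η x t ^ q') (volume.restrict (Ioi 0)) := by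
    have hm : AEStronglyMeasurable (fun p : ℝ × Euc N => Rf N η p.2 p.1 ^ q')
        ((volume.restrict (Ioi 0)).prod volume) := by
      have : (volume.restrict (Ioi (0:ℝ))).prod (volume : Measure (Euc N)) =
          (volume.prod volume).restrict (Ioi 0 ×ˢ univ) := by
        rw [← Measure.prod_restrict, Measure.restrict_univ]
      rw [this]
      refine ContinuousOn.aestronglyMeasurable ?_ (measurableSet_Ioi.prod MeasurableSet.univ)
      exact cont.comp (f := fun p : ℝ × Euc N => (p.2, p.1)) (by fun_prop) (fun p hp => ⟨mem_univ _, hp.1⟩)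
    exact hm.integral_prod_right'
  have nn : ∀ t, 0 ≤ ∫ x, Rf N η x t ^ q' := fun t => integral_nonneg fun x => rpow_nonneg (Rf_nonneg _ _ _ _) _
  rw [← Ioc_union_Ioi_eq_Ioi (zero_le_one' ℝ)]
  refine IntegrableOn.union ?_ ?_
  · refine Integrable.mono' (g := fun _ => C ^ q' * V) (integrableOn_const (by simp))
      (meas.mono_measure (Measure.restrict_mono Ioc_subset_Ioi_self le_rfl)) ?_
    refine (ae_restrict_iff' measurableSet_Ioc).2 (ae_of_all _ fun t ht => ?_)
    rw [norm_of_nonneg (nn t)]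
    exact (A1 t ht.1 ht.2).2
  · refine Integrable.mono' (g := fun t => C ^ q' * V * t ^ (-q'))
      ((integrableOn_Ioi_rpow_of_lt (by linarith) one_pos).const_mul _)
      (meas.mono_measure (Measure.restrict_mono (Ioi_subset_Ioi zero_le_one) le_rfl)) ?_
    refine (ae_restrict_iff' measurableSet_Ioi).2 (ae_of_all _ fun t ht => ?_)
    have ht : (1:ℝ) < t := ht
    rw [norm_of_nonneg (nn t)]
    exact (A2 t (by linarith) ht.le).2

lemma hp_init {N : ℕ} {η : Euc N → ℝ} (h : SC η) : ∃ L, 0 ≤ L ∧ ∀ t, 0 < t → ∀ x,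
    |heatPot N η x t - η x| ≤ L * √t := by
  obtain ⟨A, hA, hG⟩ := Gk_bounds N
  obtain ⟨L, hL⟩ := h.1.lipschitzWith_of_hasCompactSupport h.2 (by simp)
  refine ⟨L * A, by positivity, fun t ht x => ?_⟩
  have i1 : Integrable (fun y => Gk N t (x - y) * η y) :=
    ((Gk_contDiff_z N 1 ht).continuous.comp (continuous_const.sub continuous_id)
      |>.mul h.1.continuous).integrable_of_hasCompactSupport h.2.mul_left
  have i2 : Integrable (fun y => Gk N t (x - y) * η x) := (Gk_sub_integrable N ht x).mul_const _
  have e : heatPot N η x t - η x = ∫ y, (Gk N t (x - y) * η y - Gk N t (x - y) * η x) := by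
    rw [integral_sub i1 i2, integral_mul_const, Gk_sub_integral N ht, hp_eq, one_mul]
  have h2t : 0 < 2 * t := by positivity
  rw [e, show L * A * √t = ∫ y, L * A * √t * Gk N (2 * t) (x - y) by
    rw [integral_const_mul, Gk_sub_integral N h2t, mul_one]]
  rw [← Real.norm_eq_abs]
  refine norm_integral_le_of_norm_le ((Gk_sub_integrable N h2t x).const_mul _) (ae_of_all _ fun y => ?_)
  have hl := hL.norm_sub_le y x
  rw [← mul_sub, norm_mul, norm_of_nonneg (Gk_pos N ht _).le]
  have hb := (hG t ht (x - y)).2.1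
  have hp := Gk_pos N ht (x - y)
  calc Gk N t (x - y) * ‖η y - η x‖ ≤ Gk N t (x - y) * (L * ‖y - x‖) := by gcongr
    _ = L * (‖x - y‖ * Gk N t (x - y)) := by rw [norm_sub_rev]; ring
    _ ≤ L * (A * √t * Gk N (2 * t) (x - y)) := by gcongr
    _ = _ := by ring

end

section
open scoped ContDiff Convolution

lemma two_le_inf : (2 : WithTop ℕ∞) ≤ ((⊤ : ℕ∞) : WithTop ℕ∞) := WithTop.coe_le_coe.2 (le_top : (2:ℕ∞) ≤ ⊤)

/-- exponent alpha -/
def al (q : ℝ) : ℝ := 2 * (q / (q - 1))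
/-- exponent of cutoff -/
def emm (N : ℕ) (q : ℝ) : ℝ := 2 * N + 2 * (q / (q - 1)) + 2
def c1 (N : ℕ) (q : ℝ) : ℝ := 4 * al q + 4 * N * (al q * (al q - 1) + al q * emm N q)
def c2 (N : ℕ) (q : ℝ) : ℝ := 4 * N * (emm N q * (emm N q - 1) + al q * emm N q)
def c3 (N : ℕ) (q : ℝ) : ℝ := (4 * c1 N q) ^ (q / (q - 1))
def c4 (N : ℕ) (q : ℝ) : ℝ := (4 * c2 N q) ^ (q / (q - 1))

lemma q'_gt {q : ℝ} (hq : 1 < q) : 1 < q / (q - 1) := by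
  rw [lt_div_iff₀ (by linarith)]; linarith
lemma al_gt {q : ℝ} (hq : 1 < q) : 2 < al q := by have := q'_gt hq; unfold al; linarith
lemma em_gt (N : ℕ) {q : ℝ} (hq : 1 < q) : 2 < emm N q := by
  have := q'_gt hq; have : (0:ℝ) ≤ N := by positivity
  unfold emm; linarith
lemma al_q {q : ℝ} (hq : 1 < q) : (al q - 2) * q = al q := by
  have : q - 1 ≠ 0 := by linarith
  unfold al; field_simp; ring
lemma c1_pos (N : ℕ) {q : ℝ} (hq : 1 < q) : 0 < c1 N q := by
  have h1 := al_gt hq; have h2 := em_gt N hq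
  have : 0 < al q - 1 := by linarith
  have : 0 < al q := by linarith
  have : 0 < emm N q := by linarith
  unfold c1; positivity
lemma c2_nonneg (N : ℕ) {q : ℝ} (hq : 1 < q) : 0 ≤ c2 N q := by
  have h1 := al_gt hq; have h2 := em_gt N hq
  have : 0 < emm N q - 1 := by linarith
  have : 0 < al q := by linarith
  have : 0 < emm N q := by linarith
  unfold c2; positivity
lemma c3_pos (N : ℕ) {q : ℝ} (hq : 1 < q) : 0 < c3 N q := rpow_pos_of_pos (by have := c1_pos N hq; linarith) _
lemma c4_nonneg (N : ℕ) {q : ℝ} (hq : 1 < q) : 0 ≤ c4 N q := rpow_nonneg (by have := c2_nonneg N hq; linarith) _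

lemma rpow_split2 {a e : ℝ} (ha : 0 ≤ a) (he : 2 < e) : a ^ e = a ^ (e - 2) * a ^ 2 := by
  rw [← rpow_natCast a 2, ← rpow_add_of_nonneg ha (by linarith) (by norm_num)]; norm_num
lemma rpow_split1 {a e : ℝ} (ha : 0 ≤ a) (he : 2 < e) : a ^ (e - 1) = a ^ (e - 2) * a := by
  nth_rewrite 3 [← rpow_one a]
  rw [← rpow_add_of_nonneg ha (by linarith) (by norm_num)]; ring_nf

lemma yng_point (N : ℕ) {q : ℝ} (hq : 1 < q) {a p u R n : ℝ} (ha : 0 ≤ a) (ha1 : a ≤ 1) (hp : 0 ≤ p)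
    (hp1 : p ≤ 1) (hu : 0 ≤ u) (hR : 0 ≤ R) (hn : 1 ≤ n) :
    u * (a ^ (al q - 2) * p ^ (emm N q) * (c1 N q * R) + c2 N q * (a ^ al q * p ^ (emm N q - 2)) / n ^ 2)
      ≤ 1 / 2 * (u ^ q * (a ^ al q * p ^ emm N q)) + c3 N q * (R ^ (q / (q - 1)) * p ^ emm N q)
        + c4 N q * (1 / n) ^ (N + 1) + c2 N q / n * (u * (a ^ al q * p ^ emm N q)) := by
  have hq' := q'_gt hq
  have h1 := c1_pos N hq
  have h2 := c2_nonneg N hq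
  have hn0 : 0 < n := by linarith
  have hal := al_gt hq
  have hem := em_gt N hq
  have hP : 0 ≤ p ^ emm N q := rpow_nonneg hp _
  have hA : 0 ≤ a ^ al q := rpow_nonneg ha _
  have hA1 : a ^ al q ≤ 1 := rpow_le_one ha ha1 (by linarith)
  have huq : 0 ≤ u ^ q := rpow_nonneg hu _
  have t1 : u * (a ^ (al q - 2) * p ^ (emm N q) * (c1 N q * R)) ≤
      1 / 4 * (u ^ q * (a ^ al q * p ^ emm N q)) + c3 N q * (R ^ (q / (q - 1)) * p ^ emm N q) := by
    have y := young' hq (x := u * a ^ (al q - 2)) (z := c1 N q * R)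
      (mul_nonneg hu (rpow_nonneg ha _)) (by positivity)
    rw [mul_rpow hu (rpow_nonneg ha _), ← rpow_mul ha, al_q hq, ← mul_assoc 4,
      mul_rpow (by positivity) hR] at y
    have := mul_le_mul_of_nonneg_right y hP
    unfold c3
    linarith
  have t2 : u * (c2 N q * (a ^ al q * p ^ (emm N q - 2)) / n ^ 2) ≤
      1 / 4 * (u ^ q * (a ^ al q * p ^ emm N q)) + c4 N q * (1 / n) ^ (N + 1)
        + c2 N q / n * (u * (a ^ al q * p ^ emm N q)) := by
    have h4 : 0 ≤ c4 N q * (1 / n) ^ (N + 1) := mul_nonneg (c4_nonneg N hq) (by positivity)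
    have z1 : 0 ≤ 1 / 4 * (u ^ q * (a ^ al q * p ^ emm N q)) := by positivity
    have z2 : 0 ≤ c2 N q / n * (u * (a ^ al q * p ^ emm N q)) := by positivity
    rcases hp.eq_or_lt with h0 | hp0
    · have hz : p ^ (emm N q - 2) = 0 := by rw [← h0, zero_rpow (by linarith : emm N q - 2 ≠ 0)]
      rw [hz]
      simp only [mul_zero, zero_div]; linarith
    have hs := rpow_split2 hp hem
    have hY : 0 ≤ p ^ (emm N q - 2) := rpow_nonneg hp _
    rcases le_total (1 / n) (p ^ 2) with hc | hc
    · have : u * (c2 N q * (a ^ al q * p ^ (emm N q - 2)) / n ^ 2) ≤ c2 N q / n * (u * (a ^ al q * p ^ emm N q)) := by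
        calc u * (c2 N q * (a ^ al q * p ^ (emm N q - 2)) / n ^ 2)
            = c2 N q / n * (u * (a ^ al q * (p ^ (emm N q - 2) * (1 / n)))) := by field_simp
          _ ≤ c2 N q / n * (u * (a ^ al q * (p ^ (emm N q - 2) * p ^ 2))) := by gcongr
          _ = _ := by rw [hs]
      linarith
    · have y := young' hq (x := u) (z := c2 N q / (p ^ 2 * n ^ 2)) hu (by positivity)
      have y2 := mul_le_mul_of_nonneg_right y (mul_nonneg hA hP)
      have e1 : u * (c2 N q * (a ^ al q * p ^ (emm N q - 2)) / n ^ 2) =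
          u * (c2 N q / (p ^ 2 * n ^ 2)) * (a ^ al q * p ^ emm N q) := by
        rw [hs]; field_simp
      have e2 : (4 * (c2 N q / (p ^ 2 * n ^ 2))) ^ (q / (q - 1)) * (a ^ al q * p ^ emm N q) ≤
          c4 N q * (1 / n) ^ (N + 1) := by
        have hpm : p ^ emm N q = (p ^ 2) ^ (q / (q - 1)) * (p ^ 2) ^ (N + 1) := by
          rw [← rpow_natCast p 2, ← rpow_mul hp, ← rpow_natCast _ (N + 1), ← rpow_mul hp,
            ← rpow_add hp0]
          congr 1
          unfold emm; push_cast; ring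
        have hnn : 1 ≤ (n ^ 2) ^ (q / (q - 1)) := one_le_rpow (one_le_pow₀ hn) (by linarith)
        rw [mul_div_assoc', div_rpow (by positivity) (by positivity),
          mul_rpow (x := p ^ 2) (y := n ^ 2) (by positivity) (by positivity), hpm]
        have hpp : 0 < (p ^ 2) ^ (q / (q - 1)) := by positivity
        have h44 : 0 ≤ (4 * c2 N q) ^ (q / (q - 1)) := by positivity
        calc _ = (4 * c2 N q) ^ (q / (q - 1)) * ((a ^ al q * (p ^ 2) ^ (N + 1)) / (n ^ 2) ^ (q / (q - 1))) := by
              field_simp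
          _ ≤ (4 * c2 N q) ^ (q / (q - 1)) * ((1 * (1 / n) ^ (N + 1)) / 1) := by gcongr
          _ = _ := by rw [c4]; ring
      rw [e1]
      linarith
  linarith

def hh (N : ℕ) (η : Euc N → ℝ) (n : ℕ) (x : Euc N) (t : ℝ) : ℝ := 1 - (1 + 1 / (n : ℝ)) * heatPot N η x t
def gg {N : ℕ} (n : ℕ) (x : Euc N) : ℝ := 1 - ‖x‖ ^ 2 / (n : ℝ) ^ 2
def aa (N : ℕ) (η : Euc N → ℝ) (n : ℕ) (x : Euc N) (t : ℝ) : ℝ := max (hh N η n x t) 0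
def pp {N : ℕ} (n : ℕ) (x : Euc N) : ℝ := max (gg n x) 0
def ww (N : ℕ) (q : ℝ) (η : Euc N → ℝ) (n : ℕ) (x : Euc N) (t : ℝ) : ℝ :=
  aa N η n x t ^ al q * pp n x ^ emm N q
def wt (N : ℕ) (q : ℝ) (η : Euc N → ℝ) (n : ℕ) (x : Euc N) (t : ℝ) : ℝ :=
  al q * aa N η n x t ^ (al q - 1) * (-((1 + 1 / (n : ℝ)) * deriv (fun τ => heatPot N η x τ) t)) *
    pp n x ^ emm N q

lemma gg_contDiff {N : ℕ} (n : ℕ) : ContDiff ℝ 2 (gg (N := N) n) := by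
  unfold gg; exact contDiff_const.sub ((contDiff_norm_sq ℝ).div_const _)

lemma Dd_gg {N : ℕ} (n : ℕ) (i : Fin N) : Dd i (gg n) = fun x => -2 / (n:ℝ) ^ 2 * x i := by
  funext x
  unfold Dd gg
  have h1 : HasFDerivAt (fun x : Euc N => ‖x‖ ^ 2) (2 • innerSL ℝ x) x := by
    simpa using (hasFDerivAt_id x).norm_sq
  have h2 : HasFDerivAt (fun x : Euc N => 1 - ‖x‖ ^ 2 / (n:ℝ) ^ 2)
      (-(((n:ℝ) ^ 2)⁻¹ • (2 • innerSL ℝ x))) x := by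
    have := (h1.mul_const (((n:ℝ) ^ 2)⁻¹)).const_sub 1
    simpa [div_eq_mul_inv] using this
  rw [h2.fderiv]
  simp [EuclideanSpace.inner_single_right]
  ring

lemma DdDd_gg {N : ℕ} (n : ℕ) (i : Fin N) (x : Euc N) : Dd i (Dd i (gg n)) x = -2 / (n:ℝ) ^ 2 := by
  rw [Dd_gg]
  unfold Dd
  have : HasFDerivAt (fun x : Euc N => -2 / (n:ℝ) ^ 2 * x i)
      ((-2 / (n:ℝ) ^ 2) • (EuclideanSpace.proj i : Euc N →L[ℝ] ℝ)) x :=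
    (EuclideanSpace.proj i : Euc N →L[ℝ] ℝ).hasFDerivAt.const_mul _
  rw [this.fderiv]
  simp

lemma hh_contDiff {N : ℕ} {η : Euc N → ℝ} (h : SC η) (n : ℕ) {t : ℝ} (ht : 0 < t) :
    ContDiff ℝ 2 (fun x => hh N η n x t) :=
  contDiff_const.sub (contDiff_const.mul ((hp_contDiff_x h ht).of_le two_le_inf))

lemma ww_contDiff {N : ℕ} {q : ℝ} (hq : 1 < q) {η : Euc N → ℝ} (h : SC η) (n : ℕ) {t : ℝ} (ht : 0 < t) :
    ContDiff ℝ 2 (fun x => ww N q η n x t) :=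
  ((maxpow_contDiff (al_gt hq)).comp (hh_contDiff h n ht)).mul
    ((maxpow_contDiff (em_gt N hq)).comp (gg_contDiff n))

lemma maxpow_deriv2 {a : ℝ} (ha : 2 < a) (s : ℝ) :
    HasDerivAt (fun s : ℝ => a * (max s 0) ^ (a - 1)) (a * (a - 1) * (max s 0) ^ (a - 2)) s := by
  have := (maxpow_deriv (a := a - 1) (by linarith) s).const_mul a
  rw [show a - 1 - 1 = a - 2 by ring] at this
  rwa [mul_assoc]

lemma DdDd_ww {N : ℕ} {q : ℝ} (hq : 1 < q) {η : Euc N → ℝ} (h : SC η) (n : ℕ) {t : ℝ} (ht : 0 < t)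
    (i : Fin N) (x : Euc N) : Dd i (Dd i (fun x => ww N q η n x t)) x =
     aa N η n x t ^ al q * (emm N q * pp n x ^ (emm N q - 1) * Dd i (Dd i (gg n)) x +
        emm N q * (emm N q - 1) * pp n x ^ (emm N q - 2) * (Dd i (gg n) x) ^ 2) +
     pp n x ^ emm N q * (al q * aa N η n x t ^ (al q - 1) * Dd i (Dd i (fun x => hh N η n x t)) x +
        al q * (al q - 1) * aa N η n x t ^ (al q - 2) * (Dd i (fun x => hh N η n x t) x) ^ 2) +
     2 * ((al q * aa N η n x t ^ (al q - 1) * Dd i (fun x => hh N η n x t) x) *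
       (emm N q * pp n x ^ (emm N q - 1) * Dd i (gg n) x)) := by
  have ha := al_gt hq
  have he := em_gt N hq
  have hH := hh_contDiff h n ht
  have hG := gg_contDiff (N := N) n
  have m1 := DdDd_mul (i := i) ((maxpow_contDiff ha).comp hH) ((maxpow_contDiff he).comp hG) x
  have m2 := DdDd_comp (i := i) (maxpow_deriv (a := al q) (by linarith)) (maxpow_deriv2 ha) hH x
  have m3 := DdDd_comp (i := i) (maxpow_deriv (a := emm N q) (by linarith)) (maxpow_deriv2 he) hG x
  have m4 := congrFun (Dd_comp (i := i) (maxpow_deriv (a := al q) (by linarith)) (hH.differentiable (by norm_num))) x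
  have m5 := congrFun (Dd_comp (i := i) (maxpow_deriv (a := emm N q) (by linarith)) (hG.differentiable (by norm_num))) x
  simp only [Function.comp_def] at m1
  rw [m2, m3, m4, m5] at m1
  exact m1

lemma ww_lap {N : ℕ} {q : ℝ} (hq : 1 < q) {η : Euc N → ℝ} (h : SC η) (h0 : ∀ x, 0 ≤ η x)
    (h1 : ∀ x, η x ≤ 1) {n : ℕ} (hn : 1 ≤ n) {t : ℝ} (ht : 0 < t) (x : Euc N) :
    lapl (fun x => ww N q η n x t) x + wt N q η n x t ≤
      aa N η n x t ^ (al q - 2) * pp n x ^ (emm N q) * (c1 N q * Rf N η x t) +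
       c2 N q * (aa N η n x t ^ al q * pp n x ^ (emm N q - 2)) / (n:ℝ) ^ 2 := by
  have hal := al_gt hq
  have hem := em_gt N hq
  have hn' : (1:ℝ) ≤ n := by exact_mod_cast hn
  have hn0 : (0:ℝ) < n := by linarith
  have hH := hh_contDiff h n ht
  have hHx : ContDiff ℝ 2 (fun x => heatPot N η x t) := (hp_contDiff_x h ht).of_le two_le_inf
  set c : ℝ := 1 + 1 / (n:ℝ) with hc
  have hc0 : 0 ≤ c := by positivity
  have hc2 : c ≤ 2 := by
    have : 1 / (n:ℝ) ≤ 1 := by rw [div_le_one hn0]; exact hn'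
    linarith
  set G := ‖fderiv ℝ (fun y => heatPot N η y t) x‖ with hGdef
  set H' := deriv (fun τ => heatPot N η x τ) t with hH'
  have hG0 : 0 ≤ G := norm_nonneg _
  -- first derivatives of hh
  have eD : ∀ i, Dd i (fun x => hh N η n x t) = fun y => -c * Dd i (fun x => heatPot N η x t) y := by
    intro i
    exact Dd_comp (i := i) (φ := fun s => 1 - c * s) (φ' := fun _ => -c)
      (fun s => by simpa using ((hasDerivAt_id s).const_mul c).const_sub 1) (hHx.differentiable (by norm_num))
  have eDD : ∀ i, Dd i (Dd i (fun x => hh N η n x t)) x = -c * Dd i (Dd i (fun x => heatPot N η x t)) x := by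
    intro i
    have := DdDd_comp (i := i) (φ := fun s => 1 - c * s) (φ' := fun _ => -c) (φ'' := fun _ => 0)
      (fun s => by simpa using ((hasDerivAt_id s).const_mul c).const_sub 1)
      (fun s => hasDerivAt_const s (-c)) hHx x
    rw [zero_mul, add_zero] at this; exact this
  have hlap : ∑ i, Dd i (Dd i (fun x => hh N η n x t)) x = -c * H' := by
    rw [hH', hp_dt' h ht x, ← hp_lapl h ht x, lapl_eq, Finset.mul_sum]
    exact Finset.sum_congr rfl fun i _ => eDD i
  have hD : ∀ i, (Dd i (fun x => hh N η n x t) x) ^ 2 ≤ 4 * G ^ 2 := by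
    intro i
    have k : |Dd i (fun x => heatPot N η x t) x| ≤ G := by
      have := (fderiv ℝ (fun y => heatPot N η y t) x).le_opNorm (EuclideanSpace.single i 1)
      simpa [Dd] using this
    have k2 : (Dd i (fun x => heatPot N η x t) x) ^ 2 ≤ G ^ 2 := by
      rw [← sq_abs]; exact pow_le_pow_left₀ (abs_nonneg _) k 2
    rw [eD]
    calc (-c * Dd i (fun x => heatPot N η x t) x) ^ 2 = c ^ 2 * (Dd i (fun x => heatPot N η x t) x) ^ 2 := by ring
      _ ≤ 2 ^ 2 * G ^ 2 := by gcongr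
      _ = _ := by ring
  have ha0 : 0 ≤ aa N η n x t := le_max_right _ _
  have ha1 : aa N η n x t ≤ 1 := by
    refine max_le ?_ zero_le_one
    have := (hp_mem h0 h1 ht x).1
    unfold hh
    have : 0 ≤ c * heatPot N η x t := by positivity
    linarith
  have hp0 : 0 ≤ pp n x := le_max_right _ _
  have hY : ∀ i, pp n x ^ (emm N q - 2) * (Dd i (gg n) x) ^ 2 ≤ pp n x ^ (emm N q - 2) * (4 / (n:ℝ) ^ 2) := by
    intro i
    rcases le_or_gt (gg n x) 0 with hg | hg
    · rw [pp, max_eq_right hg, zero_rpow (by linarith)]; simp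
    · refine mul_le_mul_of_nonneg_left ?_ (rpow_nonneg hp0 _)
      rw [Dd_gg]
      have k : (x i) ^ 2 ≤ ‖x‖ ^ 2 := by
        rw [← sq_abs]; exact pow_le_pow_left₀ (abs_nonneg _) (PiLp.norm_apply_le x i) 2
      have k2 : ‖x‖ ^ 2 ≤ (n:ℝ) ^ 2 := by
        unfold gg at hg
        have : ‖x‖ ^ 2 / (n:ℝ) ^ 2 < 1 := by linarith
        rw [div_lt_one (by positivity)] at this
        exact this.le
      calc (-2 / (n:ℝ) ^ 2 * x i) ^ 2 = 4 / (n:ℝ) ^ 4 * (x i) ^ 2 := by ring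
        _ ≤ 4 / (n:ℝ) ^ 4 * (n:ℝ) ^ 2 := mul_le_mul_of_nonneg_left (k.trans k2) (by positivity)
        _ = _ := by field_simp
  rw [lapl_eq]
  simp_rw [DdDd_ww hq h n ht, DdDd_gg]
  unfold wt
  rw [rpow_split2 ha0 hal, rpow_split1 ha0 hal, rpow_split2 hp0 hem, rpow_split1 hp0 hem]
  change _ ≤ _ * (c1 N q * (G ^ 2 + |H'|)) + _
  have hX0 : 0 ≤ aa N η n x t ^ (al q - 2) := rpow_nonneg ha0 _
  have hY0 : 0 ≤ pp n x ^ (emm N q - 2) := rpow_nonneg hp0 _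
  set X := aa N η n x t ^ (al q - 2)
  set Y := pp n x ^ (emm N q - 2)
  set a := aa N η n x t
  set p := pp n x
  unfold c1 c2
  set α := al q
  set M := emm N q
  rw [Finset.sum_congr rfl (g := fun i => (X * a ^ 2 * (M * (Y * p) * (-2 / (n:ℝ) ^ 2) + M * (M - 1) * Y * Dd i (gg n) x ^ 2)
     + Y * p ^ 2 * (α * (α - 1) * X * Dd i (fun x => hh N η n x t) x ^ 2) +
     2 * (α * (X * a) * Dd i (fun x => hh N η n x t) x * (M * (Y * p) * Dd i (gg n) x))) + (Y * p ^ 2 * (α * (X * a))) *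
       Dd i (Dd i (fun x => hh N η n x t)) x) (fun i _ => by ring), Finset.sum_add_distrib, ← Finset.mul_sum, hlap]
  have each : ∀ i, (X * a ^ 2 * (M * (Y * p) * (-2 / (n:ℝ) ^ 2) + M * (M - 1) * Y * Dd i (gg n) x ^ 2)
     + Y * p ^ 2 * (α * (α - 1) * X * Dd i (fun x => hh N η n x t) x ^ 2) +
     2 * (α * (X * a) * Dd i (fun x => hh N η n x t) x * (M * (Y * p) * Dd i (gg n) x))) ≤
      X * a ^ 2 * (M * (M - 1) + α * M) * (Y * (4 / (n:ℝ) ^ 2)) +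
      Y * p ^ 2 * X * (α * (α - 1) + α * M) * (4 * G ^ 2) := by
    intro i
    have e1 := hY i
    have e2 := hD i
    set d := Dd i (gg n) x
    set e := Dd i (fun x => hh N η n x t) x
    have f1 : 0 ≤ X * a ^ 2 * (M * (Y * p) * (2 / (n:ℝ) ^ 2)) := by
      have : 0 ≤ M := by linarith
      positivity
    have f2 : 0 ≤ α * M * X * Y * (p * e - a * d) ^ 2 := by
      have : 0 ≤ M := by linarith
      have : 0 ≤ α := by linarith
      positivity
    have f3 : X * a ^ 2 * (M * (M - 1) + α * M) * (Y * d ^ 2) ≤ X * a ^ 2 * (M * (M - 1) + α * M) * (Y * (4 / (n:ℝ) ^ 2)) := by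
      refine mul_le_mul_of_nonneg_left e1 ?_
      have : 0 ≤ M := by linarith
      have : 0 ≤ M - 1 := by linarith
      have : 0 ≤ α := by linarith
      positivity
    have f4 : Y * p ^ 2 * X * (α * (α - 1) + α * M) * e ^ 2 ≤ Y * p ^ 2 * X * (α * (α - 1) + α * M) * (4 * G ^ 2) := by
      refine mul_le_mul_of_nonneg_left e2 ?_
      have : 0 ≤ M := by linarith
      have : 0 ≤ α - 1 := by linarith
      have : 0 ≤ α := by linarith
      positivity
    rw [neg_div]
    linarith
  have hsum := Finset.sum_le_sum fun i (_ : i ∈ (Finset.univ : Finset (Fin N))) => each i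
  rw [Finset.sum_const, Finset.card_univ, Fintype.card_fin, nsmul_eq_mul] at hsum
  have hlast : (Y * p ^ 2 * (α * (X * a))) * (-c * H') + α * (X * a) * (-(c * H')) * (Y * p ^ 2) ≤
      X * (Y * p ^ 2) * (4 * α * |H'|) := by
    have hα : 0 ≤ α := by linarith
    have k : a * (c * -H') ≤ 1 * (2 * |H'|) := by
      have := neg_le_abs H'
      calc a * (c * -H') ≤ a * (c * |H'|) := by gcongr
        _ ≤ 1 * (2 * |H'|) := by gcongr
    have := mul_le_mul_of_nonneg_left k (show 0 ≤ 2 * α * X * (Y * p ^ 2) by positivity)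
    linarith
  have hx1 : 0 ≤ X * (Y * p ^ 2) * (4 * α * G ^ 2) := by
    have hα : 0 ≤ α := by linarith
    positivity
  have hx2 : 0 ≤ X * (Y * p ^ 2) * (4 * N * (α * (α - 1) + α * M) * |H'|) := by
    have : 0 ≤ M := by linarith
    have : 0 ≤ α - 1 := by linarith
    have hα : 0 ≤ α := by linarith
    positivity
  calc _ ≤ N * (X * a ^ 2 * (M * (M - 1) + α * M) * (Y * (4 / (n:ℝ) ^ 2)) +
      Y * p ^ 2 * X * (α * (α - 1) + α * M) * (4 * G ^ 2)) + X * (Y * p ^ 2) * (4 * α * |H'|) := by linarith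
    _ ≤ N * (X * a ^ 2 * (M * (M - 1) + α * M) * (Y * (4 / (n:ℝ) ^ 2)) +
      Y * p ^ 2 * X * (α * (α - 1) + α * M) * (4 * G ^ 2)) + X * (Y * p ^ 2) * (4 * α * |H'|)
       + X * (Y * p ^ 2) * (4 * α * G ^ 2) + X * (Y * p ^ 2) * (4 * N * (α * (α - 1) + α * M) * |H'|) := by linarith
    _ = _ := by ring

end

section
open scoped ContDiff Convolution

lemma pp_zero {N n : ℕ} (hn : 1 ≤ n) {x : Euc N} (hx : x ∉ closedBall (0 : Euc N) n) : pp n x = 0 := by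
  have hn' : (1:ℝ) ≤ n := by exact_mod_cast hn
  rw [mem_closedBall, dist_zero_right, not_le] at hx
  refine max_eq_right ?_
  unfold gg
  have : 1 ≤ ‖x‖ ^ 2 / (n:ℝ) ^ 2 := by
    rw [one_le_div (by positivity)]; exact pow_le_pow_left₀ (by positivity) hx.le 2
  linarith

lemma pp_cont {N : ℕ} (n : ℕ) : Continuous (pp (N := N) n) := (gg_contDiff n).continuous.max continuous_const

lemma pp_nonneg {N : ℕ} (n : ℕ) (x : Euc N) : 0 ≤ pp n x := le_max_right _ _
lemma pp_le {N : ℕ} (n : ℕ) (x : Euc N) : pp n x ≤ 1 := by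
  refine max_le ?_ zero_le_one
  unfold gg
  have : 0 ≤ ‖x‖ ^ 2 / (n:ℝ) ^ 2 := by positivity
  linarith
lemma aa_nonneg {N : ℕ} (η : Euc N → ℝ) (n : ℕ) (x : Euc N) (t : ℝ) : 0 ≤ aa N η n x t := le_max_right _ _
lemma aa_le {N : ℕ} {η : Euc N → ℝ} (h0 : ∀ x, 0 ≤ η x) (h1 : ∀ x, η x ≤ 1) (n : ℕ) (x : Euc N) {t : ℝ} (ht : 0 < t) :
    aa N η n x t ≤ 1 := by
  refine max_le ?_ zero_le_one
  have := (hp_mem h0 h1 ht x).1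
  unfold hh
  have : 0 ≤ (1 + 1 / (n:ℝ)) * heatPot N η x t := by positivity
  linarith

lemma ww_nonneg {N : ℕ} (q : ℝ) (η : Euc N → ℝ) (n : ℕ) (x : Euc N) (t : ℝ) : 0 ≤ ww N q η n x t :=
  mul_nonneg (rpow_nonneg (aa_nonneg _ _ _ _) _) (rpow_nonneg (pp_nonneg _ _) _)

lemma aa_cont {N : ℕ} {η : Euc N → ℝ} (h : SC η) (n : ℕ) :
    ContinuousOn (fun p : Euc N × ℝ => aa N η n p.1 p.2) (univ ×ˢ Ioi 0) := by
  have := (hp_contDiff h).continuousOn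
  unfold aa hh
  exact ContinuousOn.sup (continuousOn_const.sub (continuousOn_const.mul this)) continuousOn_const

lemma ww_cont {N : ℕ} {q : ℝ} (hq : 1 < q) {η : Euc N → ℝ} (h : SC η) (n : ℕ) :
    ContinuousOn (fun p : Euc N × ℝ => ww N q η n p.1 p.2) (univ ×ˢ Ioi 0) := by
  have hal := al_gt hq
  have hem := em_gt N hq
  refine ((aa_cont h n).rpow_const fun _ _ => Or.inr (by linarith)).mul ?_
  exact (((pp_cont n).comp continuous_fst).rpow_const fun _ => Or.inr (by linarith)).continuousOn

lemma wt_cont {N : ℕ} {q : ℝ} (hq : 1 < q) {η : Euc N → ℝ} (h : SC η) (n : ℕ) :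
    ContinuousOn (fun p : Euc N × ℝ => wt N q η n p.1 p.2) (univ ×ˢ Ioi 0) := by
  have hal := al_gt hq
  have hem := em_gt N hq
  have hV := (hp_contDiff h).of_le (m := 1) (by simp)
  refine ((continuousOn_const.mul ((aa_cont h n).rpow_const fun _ _ => Or.inr (by linarith))).mul
    (continuousOn_const.mul (deriv_cont hV)).neg).mul ?_
  exact (((pp_cont n).comp continuous_fst).rpow_const fun _ => Or.inr (by linarith)).continuousOn

lemma ww_zero {N : ℕ} {q : ℝ} (hq : 1 < q) (η : Euc N → ℝ) {n : ℕ} (hn : 1 ≤ n) (t : ℝ) {x : Euc N}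
    (hx : x ∉ closedBall (0 : Euc N) n) : ww N q η n x t = 0 := by
  have hem := em_gt N hq
  rw [ww, pp_zero hn hx, zero_rpow (by linarith), mul_zero]
lemma wt_zero {N : ℕ} {q : ℝ} (hq : 1 < q) (η : Euc N → ℝ) {n : ℕ} (hn : 1 ≤ n) (t : ℝ) {x : Euc N}
    (hx : x ∉ closedBall (0 : Euc N) n) : wt N q η n x t = 0 := by
  have hem := em_gt N hq
  rw [wt, pp_zero hn hx, zero_rpow (by linarith), mul_zero]

lemma ww_deriv {N : ℕ} {q : ℝ} (hq : 1 < q) {η : Euc N → ℝ} (h : SC η) (n : ℕ) {t : ℝ} (ht : 0 < t)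
    (x : Euc N) : HasDerivAt (fun t => ww N q η n x t) (wt N q η n x t) t := by
  have hal := al_gt hq
  have hH : HasDerivAt (fun t => heatPot N η x t) (deriv (fun τ => heatPot N η x τ) t) t :=
    (hp_dt h ht x).differentiableAt.hasDerivAt
  have h1 : HasDerivAt (fun t => hh N η n x t) (-((1 + 1 / (n : ℝ)) * deriv (fun τ => heatPot N η x τ) t)) t :=
    (hH.const_mul _).const_sub 1
  have h2 := (maxpow_deriv (a := al q) (by linarith) (hh N η n x t)).comp t h1
  exact h2.mul_const _

lemma slice_cont {N : ℕ} {f : Euc N → ℝ → ℝ}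
    (h : ContinuousOn (fun p : Euc N × ℝ => f p.1 p.2) (univ ×ˢ Ioi 0)) {t : ℝ} (ht : 0 < t) :
    Continuous (fun x => f x t) := by
  rw [← continuousOn_univ]
  exact h.comp (f := fun x : Euc N => (x, t)) (by fun_prop) (fun z _ => ⟨mem_univ _, ht⟩)

lemma swap_cont {N : ℕ} {f : Euc N → ℝ → ℝ}
    (h : ContinuousOn (fun p : Euc N × ℝ => f p.1 p.2) (univ ×ˢ Ioi 0)) :
    ContinuousOn (Function.uncurry fun t x => f x t) (Ioi 0 ×ˢ univ) :=
  h.comp (f := fun p : ℝ × Euc N => (p.2, p.1)) (by fun_prop) (fun p hp => ⟨mem_univ _, hp.1⟩)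

lemma int_cs {N n : ℕ} {f : Euc N → ℝ} (hf : Continuous f)
    (h0 : ∀ x ∉ closedBall (0 : Euc N) n, f x = 0) : Integrable f :=
  hf.integrable_of_hasCompactSupport (HasCompactSupport.intro (isCompact_closedBall _ _) h0)

def kap (N : ℕ) (q : ℝ) (n : ℕ) : ℝ :=
  c4 N q * (1 / (n:ℝ)) ^ (N + 1) * volume.real (closedBall (0 : Euc N) n)

lemma kap_eq (N : ℕ) (q : ℝ) {n : ℕ} (hn : 1 ≤ n) :
    kap N q n = c4 N q * volume.real (ball (0 : Euc N) 1) * (1 / (n:ℝ)) := by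
  have hn' : (1:ℝ) ≤ n := by exact_mod_cast hn
  unfold kap
  rw [Measure.real, Measure.addHaar_closedBall volume (0 : Euc N) (by positivity : (0:ℝ) ≤ n), ENNReal.toReal_mul,
    ENNReal.toReal_ofReal (by positivity), finrank_euclideanSpace_fin, ← Measure.real]
  have : (n:ℝ) ≠ 0 := by positivity
  rw [one_div, inv_pow, pow_succ]
  field_simp

lemma en_deriv {N : ℕ} {q : ℝ} (hq : 1 < q) {η : Euc N → ℝ} (h : SC η) (h0 : ∀ x, 0 ≤ η x)
    (h1 : ∀ x, η x ≤ 1) {n : ℕ} (hn : 1 ≤ n) {u : Euc N → ℝ → ℝ}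
    (hu : ContDiffOn ℝ 2 (fun p : Euc N × ℝ => u p.1 p.2) (univ ×ˢ Ioi (0 : ℝ)))
    (hpos : ∀ x t, 0 < t → 0 < u x t)
    (hpde : ∀ x t, 0 < t → deriv (u x) t - lapl (fun y => u y t) x + u x t ^ q = 0) {t : ℝ} (ht : 0 < t) :
    ∃ d, HasDerivAt (fun t => ∫ x, u x t * ww N q η n x t) d t ∧
      d ≤ - (1 / 2 * ∫ x, u x t ^ q * ww N q η n x t) + c3 N q * (∫ x, Rf N η x t ^ (q / (q - 1))) + kap N q n
        + c2 N q / n * ∫ x, u x t * ww N q η n x t := by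
  have hal := al_gt hq
  have hem := em_gt N hq
  have hn' : (1:ℝ) ≤ n := by exact_mod_cast hn
  have hu1 := hu.of_le (m := 1) (by norm_num)
  have cu := hu.continuousOn
  have cd := deriv_cont hu1
  have cw := ww_cont hq h n
  have cwt := wt_cont hq h n
  refine ⟨∫ x, (deriv (u x) t * ww N q η n x t + u x t * wt N q η n x t), ?_, ?_⟩
  · refine deriv_int (F := fun t x => u x t * ww N q η n x t)
      (F' := fun t x => deriv (u x) t * ww N q η n x t + u x t * wt N q η n x t) isOpen_Ioi
      (isCompact_closedBall (0 : Euc N) n) ?_ ?_ ?_ ?_ ?_ ht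
    · intro s hs; exact slice_cont (f := fun x t => u x t * ww N q η n x t) (cu.mul cw) hs
    · intro s hs y hy; simp [ww_zero hq η hn s hy]
    · intro s hs y hy; simp [ww_zero hq η hn s hy, wt_zero hq η hn s hy]
    · intro s hs y
      exact ((part_t hu1 hs y).differentiableAt.hasDerivAt).mul (ww_deriv hq h n hs y)
    · exact swap_cont (f := fun x t => deriv (u x) t * ww N q η n x t + u x t * wt N q η n x t)
        ((cd.mul cw).add (cu.mul cwt))
  have ux : ContDiff ℝ 2 (fun x => u x t) := by
    rw [← contDiffOn_univ]
    exact hu.comp (f := fun z : Euc N => (z, t)) (by fun_prop) (fun z _ => ⟨mem_univ _, ht⟩)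
  have wx := ww_contDiff hq h n ht
  have wcs : HasCompactSupport (fun x => ww N q η n x t) :=
    HasCompactSupport.intro (isCompact_closedBall (0 : Euc N) n) fun x hx => ww_zero hq η hn t hx
  have clap : ∀ f : Euc N → ℝ, ContDiff ℝ 2 f → Continuous (lapl f) := by
    intro f hf
    show Continuous fun x => ∑ i, Dd i (Dd i f) x
    exact continuous_finsetSum _ fun i _ =>
      (Dd_contDiff (m := 0) (Dd_contDiff (m := 1) hf (by norm_num)) (by norm_num)).continuous
  have sx : Continuous fun x => u x t := ux.continuous
  have sw : Continuous fun x => ww N q η n x t := wx.continuous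
  have swt : Continuous fun x => wt N q η n x t := slice_cont cwt ht
  have suq : Continuous fun x => u x t ^ q := sx.rpow_const fun _ => Or.inr (by linarith)
  have i1 : Integrable (fun x => lapl (fun y => u y t) x * ww N q η n x t) :=
    int_cs (n := n) ((clap _ ux).mul sw) fun x hx => by simp [ww_zero hq η hn t hx]
  have i2 : Integrable (fun x => u x t * wt N q η n x t) :=
    int_cs (n := n) (sx.mul swt) fun x hx => by simp [wt_zero hq η hn t hx]
  have i3 : Integrable (fun x => u x t ^ q * ww N q η n x t) :=
    int_cs (n := n) (suq.mul sw) fun x hx => by simp [ww_zero hq η hn t hx]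
  have i4 : Integrable (fun x => u x t * ww N q η n x t) :=
    int_cs (n := n) (sx.mul sw) fun x hx => by simp [ww_zero hq η hn t hx]
  have wlcs : HasCompactSupport (lapl fun x => ww N q η n x t) := by
    refine HasCompactSupport.intro (isCompact_closedBall (0 : Euc N) n) fun x hx => ?_
    rw [lapl_eq]
    have hts : tsupport (fun x => ww N q η n x t) ⊆ closedBall (0 : Euc N) n :=
      closure_minimal (fun y hy => by by_contra hh; exact hy (ww_zero hq η hn t hh)) isClosed_closedBall
    exact Finset.sum_eq_zero fun i _ => Dd_zero_out i x (fun hh => hx (hts (tsupport_Dd i hh)))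
  have i5 : Integrable (fun x => u x t * lapl (fun x => ww N q η n x t) x) :=
    (sx.mul (clap _ wx)).integrable_of_hasCompactSupport wlcs.mul_left
  have e : ∫ x, (deriv (u x) t * ww N q η n x t + u x t * wt N q η n x t) =
      ∫ x, (u x t * lapl (fun x => ww N q η n x t) x + u x t * wt N q η n x t - u x t ^ q * ww N q η n x t) := by
    rw [integral_congr_ae (g := fun x => (lapl (fun y => u y t) x * ww N q η n x t + u x t * wt N q η n x t)
       - u x t ^ q * ww N q η n x t) (ae_of_all _ fun x => by
        have := hpde x t ht
        have : deriv (u x) t = lapl (fun y => u y t) x - u x t ^ q := by linarith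
        simp only [this]; ring)]
    have j1 : Integrable (fun x => lapl (fun y => u y t) x * ww N q η n x t + u x t * wt N q η n x t) := i1.add i2
    have j2 : Integrable (fun x => u x t * lapl (fun x => ww N q η n x t) x + u x t * wt N q η n x t) := i5.add i2
    rw [integral_sub j1 i3, integral_add i1 i2, ibp2 ux wx wcs, ← integral_add i5 i2,
      ← integral_sub j2 i3]
  rw [e]
  have hR := (Rf_integrable (q'_gt hq) h h0 h1).1 t ht
  have iB : Integrable ((closedBall (0 : Euc N) n).indicator fun _ => c4 N q * (1 / (n:ℝ)) ^ (N + 1)) :=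
    (integrable_indicator_iff measurableSet_closedBall).2
      (integrableOn_const (isCompact_closedBall _ _).measure_lt_top.ne)
  have eB : ∫ x, (closedBall (0 : Euc N) n).indicator (fun _ => c4 N q * (1 / (n:ℝ)) ^ (N + 1)) x = kap N q n := by
    rw [integral_indicator measurableSet_closedBall, setIntegral_const, kap, smul_eq_mul, mul_comm]
  have k0 : Integrable (fun x => -(1 / 2 * (u x t ^ q * ww N q η n x t))) := (i3.const_mul _).neg
  have k1 : Integrable (fun x => -(1 / 2 * (u x t ^ q * ww N q η n x t)) + c3 N q * Rf N η x t ^ (q / (q - 1))) :=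
    k0.add (hR.const_mul _)
  have k2 : Integrable (fun x => -(1 / 2 * (u x t ^ q * ww N q η n x t)) + c3 N q * Rf N η x t ^ (q / (q - 1)) +
     (closedBall (0 : Euc N) n).indicator (fun _ => c4 N q * (1 / (n:ℝ)) ^ (N + 1)) x) := k1.add iB
  rw [← eB, ← integral_const_mul, ← integral_const_mul, ← integral_const_mul, ← integral_neg,
    ← integral_add k0 (hR.const_mul _), ← integral_add k1 iB, ← integral_add k2 (i4.const_mul _)]
  refine integral_mono ((i5.add i2).sub i3) (k2.add (i4.const_mul _)) fun x => ?_
  have hux := hpos x t ht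
  have hwl := mul_le_mul_of_nonneg_left (ww_lap hq h h0 h1 hn ht x) hux.le
  have hRn : 0 ≤ Rf N η x t ^ (q / (q - 1)) := rpow_nonneg (Rf_nonneg _ _ _ _) _
  have hc3 := c3_pos N hq
  show u x t * lapl (fun x => ww N q η n x t) x + u x t * wt N q η n x t - u x t ^ q * ww N q η n x t ≤
    -(1 / 2 * (u x t ^ q * ww N q η n x t)) + c3 N q * Rf N η x t ^ (q / (q - 1)) +
     (closedBall (0 : Euc N) n).indicator (fun _ => c4 N q * (1 / (n:ℝ)) ^ (N + 1)) x +
       c2 N q / n * (u x t * ww N q η n x t)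
  by_cases hx : x ∈ closedBall (0 : Euc N) n
  · rw [indicator_of_mem hx]
    have hy := yng_point N hq (aa_nonneg η n x t) (aa_le h0 h1 n x ht) (pp_nonneg n x) (pp_le n x) hux.le
      (Rf_nonneg N η x t) hn'
    have hP1 : pp n x ^ emm N q ≤ 1 := rpow_le_one (pp_nonneg n x) (pp_le n x) (by linarith)
    have : c3 N q * (Rf N η x t ^ (q / (q - 1)) * pp n x ^ emm N q) ≤ c3 N q * Rf N η x t ^ (q / (q - 1)) := by
      refine mul_le_mul_of_nonneg_left ?_ hc3.le
      exact mul_le_of_le_one_right hRn hP1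
    change _ ≤ 1 / 2 * (u x t ^ q * ww N q η n x t) + _ + _ + c2 N q / n * (u x t * ww N q η n x t) at hy
    linarith
  · rw [indicator_of_notMem hx, ww_zero hq η hn t hx]
    rw [pp_zero hn hx, zero_rpow (by linarith), zero_rpow (by linarith)] at hwl
    simp only [mul_zero, zero_mul, zero_div, add_zero] at hwl
    have : 0 ≤ c3 N q * Rf N η x t ^ (q / (q - 1)) := by positivity
    linarith

lemma energy {N : ℕ} {q : ℝ} (hq : 1 < q) {η : Euc N → ℝ} (h : SC η) (h0 : ∀ x, 0 ≤ η x)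
    (h1 : ∀ x, η x ≤ 1) {n : ℕ} (hn : 1 ≤ n) {u : Euc N → ℝ → ℝ}
    (hu : ContDiffOn ℝ 2 (fun p : Euc N × ℝ => u p.1 p.2) (univ ×ˢ Ioi (0 : ℝ)))
    (hpos : ∀ x t, 0 < t → 0 < u x t)
    (hpde : ∀ x t, 0 < t → deriv (u x) t - lapl (fun y => u y t) x + u x t ^ q = 0) {s T : ℝ} (hs : 0 < s)
    (hsT : s ≤ T) :
    IntegrableOn (fun t => ∫ x, u x t ^ q * ww N q η n x t) (Ioc s T) ∧
    exp (-(c2 N q / n) * T) * ((∫ x, u x T * ww N q η n x T) + 1 / 2 * ∫ t in Ioc s T, ∫ x, u x t ^ q * ww N q η n x t)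
      ≤ (∫ x, u x s * ww N q η n x s) + c3 N q * Rnorm N q η + kap N q n * T := by
  set lam := c2 N q / n with hlam
  have hl0 : 0 ≤ lam := div_nonneg (c2_nonneg N hq) (by positivity)
  set I : ℝ → ℝ := fun t => ∫ x, u x t * ww N q η n x t with hI
  set A : ℝ → ℝ := fun t => ∫ x, u x t ^ q * ww N q η n x t with hA
  set P : ℝ → ℝ := fun t => ∫ x, Rf N η x t ^ (q / (q - 1)) with hP
  have hI0 : ∀ t, 0 < t → 0 ≤ I t := fun t ht =>
    integral_nonneg fun x => mul_nonneg (hpos x t ht).le (ww_nonneg _ _ _ _ _)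
  have hA0 : ∀ t, 0 < t → 0 ≤ A t := fun t ht =>
    integral_nonneg fun x => mul_nonneg (rpow_nonneg (hpos x t ht).le _) (ww_nonneg _ _ _ _ _)
  have hP0 : ∀ t, 0 ≤ P t := fun t => integral_nonneg fun x => rpow_nonneg (Rf_nonneg _ _ _ _) _
  have hk0 : 0 ≤ kap N q n := mul_nonneg (mul_nonneg (c4_nonneg N hq) (by positivity)) measureReal_nonneg
  have hc3 := (c3_pos N hq).le
  have cA : ContinuousOn A (Ioi 0) := by
    refine continuousOn_integral_of_compact_support (f := fun t x => u x t ^ q * ww N q η n x t)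
      (isCompact_closedBall (0 : Euc N) n) ?_ ?_
    · exact swap_cont (f := fun x t => u x t ^ q * ww N q η n x t)
        ((hu.continuousOn.rpow_const fun _ _ => Or.inr (by linarith)).mul (ww_cont hq h n))
    · intro t x _ hx; simp [ww_zero hq η hn t hx]
  have iA : IntegrableOn A (Icc s T) :=
    (cA.mono fun t ht => lt_of_lt_of_le hs ht.1).integrableOn_compact isCompact_Icc
  have iP0 : IntegrableOn P (Ioi 0) := (Rf_integrable (q'_gt hq) h h0 h1).2
  have iP : IntegrableOn P (Icc s T) := iP0.mono_set fun t ht => lt_of_lt_of_le hs ht.1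
  refine ⟨iA.mono_set Ioc_subset_Icc_self, ?_⟩
  choose! d hd hdle using fun t (ht : 0 < t) => en_deriv hq h h0 h1 hn hu hpos hpde ht
  set E := exp (-lam * T) with hE
  have hE0 : 0 < E := exp_pos _
  have dG : ∀ t, 0 < t → HasDerivAt (fun t => exp (-lam * t) * I t)
      (exp (-lam * t) * (d t - lam * I t)) t := by
    intro t ht
    have e1 : HasDerivAt (fun t => exp (-lam * t)) (exp (-lam * t) * (-lam * 1)) t :=
      ((hasDerivAt_id t).const_mul (-lam)).exp
    have := e1.mul (hd t ht)
    refine this.congr_deriv ?_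
    simp only [hI]; ring
  have iφ1 : IntegrableOn (fun t => -(1 / 2 * E) * A t + c3 N q * P t) (Icc s T) :=
    (iA.const_mul _).add (iP.const_mul _)
  have iκ : IntegrableOn (fun _ : ℝ => kap N q n) (Icc s T) := integrableOn_const (by simp)
  have key := intervalIntegral.sub_le_integral_of_hasDeriv_right_of_le
    (g := fun t => exp (-lam * t) * I t) (g' := fun t => exp (-lam * t) * (d t - lam * I t))
    (φ := fun t => (-(1 / 2 * E) * A t + c3 N q * P t) + kap N q n) hsT
    (fun t ht => (dG t (lt_of_lt_of_le hs ht.1)).continuousAt.continuousWithinAt)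
    (fun t ht => (dG t (hs.trans ht.1)).hasDerivWithinAt) (iφ1.add iκ) (by
      intro t ht
      have ht0 := hs.trans ht.1
      have b := hdle t ht0
      have z1 : E ≤ exp (-lam * t) := by
        refine exp_le_exp.2 ?_
        have := mul_le_mul_of_nonneg_left ht.2.le hl0
        linarith
      have z2 : exp (-lam * t) ≤ 1 := by
        rw [exp_le_one_iff]
        have := mul_nonneg hl0 ht0.le
        linarith
      have z0 : 0 < exp (-lam * t) := exp_pos _
      have a0 := hA0 t ht0
      have p0 : 0 ≤ c3 N q * P t + kap N q n := add_nonneg (mul_nonneg hc3 (hP0 t)) hk0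
      change d t ≤ -(1 / 2 * A t) + c3 N q * P t + kap N q n + lam * I t at b
      have b2 : d t - lam * I t ≤ -(1 / 2 * A t) + (c3 N q * P t + kap N q n) := by linarith
      calc exp (-lam * t) * (d t - lam * I t) ≤ exp (-lam * t) * (-(1 / 2 * A t) + (c3 N q * P t + kap N q n)) := by
            gcongr
        _ = -(exp (-lam * t) * (1 / 2 * A t)) + exp (-lam * t) * (c3 N q * P t + kap N q n) := by ring
        _ ≤ -(E * (1 / 2 * A t)) + 1 * (c3 N q * P t + kap N q n) := by gcongr
        _ = _ := by ring)
  rw [intervalIntegral.integral_of_le hsT] at key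
  have ioc : Ioc s T ⊆ Icc s T := Ioc_subset_Icc_self
  rw [integral_add (iφ1.mono_set ioc) (iκ.mono_set ioc), integral_add ((iA.mono_set ioc).const_mul _) ((iP.mono_set ioc).const_mul _),
    integral_const_mul, integral_const_mul, setIntegral_const, smul_eq_mul, Real.volume_real_Ioc_of_le hsT] at key
  have f1 : ∫ t in Ioc s T, P t ≤ Rnorm N q η :=
    setIntegral_mono_set iP0 (ae_of_all _ hP0) (ae_of_all _ fun t ht => hs.trans ht.1)
  have f2 : exp (-lam * s) * I s ≤ I s := by
    refine mul_le_of_le_one_left (hI0 s hs) ?_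
    rw [exp_le_one_iff]
    have := mul_nonneg hl0 hs.le
    linarith
  have f3 := mul_le_mul_of_nonneg_left f1 hc3
  have f4 : (T - s) * kap N q n ≤ kap N q n * T := by
    have := mul_nonneg hs.le hk0
    linarith
  linarith

end

section
open scoped ContDiff Convolution

lemma ww_le {N : ℕ} {q : ℝ} (hq : 1 < q) {η : Euc N → ℝ} (h0 : ∀ x, 0 ≤ η x) (h1 : ∀ x, η x ≤ 1) (n : ℕ)
    (x : Euc N) {t : ℝ} (ht : 0 < t) : ww N q η n x t ≤ 1 := by
  have hal := al_gt hq
  have hem := em_gt N hq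
  exact mul_le_one₀ (rpow_le_one (aa_nonneg _ _ _ _) (aa_le h0 h1 n x ht) (by linarith))
    (rpow_nonneg (pp_nonneg _ _) _) (rpow_le_one (pp_nonneg _ _) (pp_le n x) (by linarith))

lemma init_small {N : ℕ} {q : ℝ} (hq : 1 < q) {η : Euc N → ℝ} (h : SC η) (h0 : ∀ x, 0 ≤ η x)
    (h1 : ∀ x, η x ≤ 1) {K : Set (Euc N)} (hK : ∀ x ∈ K, η x = 1) {n : ℕ} (hn : 1 ≤ n) {u : Euc N → ℝ → ℝ}
    (hu : IsSol N q u K) {ε : ℝ} (hε : 0 < ε) :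
    ∃ s, 0 < s ∧ s ≤ ε ∧ ∫ x, u x s * ww N q η n x s ≤ ε := by
  obtain ⟨hu, hpos, -, hini⟩ := hu
  have hal := al_gt hq
  have hn' : (1:ℝ) ≤ n := by exact_mod_cast hn
  set c : ℝ := 1 + 1 / (n:ℝ) with hc
  have hc1 : 1 < c := by
    have : 0 < 1 / (n:ℝ) := by positivity
    linarith
  have hci : 1 / c < 1 := by rw [div_lt_one (by linarith)]; exact hc1
  set θ := (1 + 1 / c) / 2 with hθ
  set E : Set (Euc N) := closedBall 0 n ∩ {x | η x ≤ θ} with hE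
  have cE : IsCompact E := (isCompact_closedBall _ _).inter_right (isClosed_le h.1.continuous continuous_const)
  have hEK : E ⊆ Kᶜ := by
    intro x hx hxK
    have := hx.2
    rw [mem_setOf_eq, hK x hxK] at this
    linarith
  obtain ⟨L, hL0, hL⟩ := hp_init h
  set V := volume.real (closedBall (0 : Euc N) n) with hV
  have hV0 : 0 ≤ V := measureReal_nonneg
  have ev1 := (hini E cE hEK).eventually (gt_mem_nhds (show 0 < ε / (V + 1) by positivity))
  have ev2 : ∀ᶠ s in nhdsWithin (0:ℝ) (Ioi 0), L * √s < θ - 1 / c := by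
    have : Tendsto (fun s => L * √s) (nhdsWithin (0:ℝ) (Ioi 0)) (nhds (L * √0)) :=
      ((continuous_const.mul Real.continuous_sqrt).tendsto 0).mono_left nhdsWithin_le_nhds
    refine this.eventually (gt_mem_nhds ?_)
    simp only [Real.sqrt_zero, mul_zero]; linarith
  have ev3 : ∀ᶠ s in nhdsWithin (0:ℝ) (Ioi 0), s < ε := nhdsWithin_le_nhds (gt_mem_nhds hε)
  obtain ⟨s, hs1, hs2, hs3, hs0⟩ := (ev1.and (ev2.and (ev3.and self_mem_nhdsWithin))).exists
  have hs0 : 0 < s := hs0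
  refine ⟨s, hs0, hs3.le, ?_⟩
  set m := sSup ((fun x => u x s) '' E) with hm
  have hm0 : 0 ≤ m := Real.sSup_nonneg (by rintro _ ⟨x, -, rfl⟩; exact (hpos x s hs0).le)
  have cu : Continuous fun x => u x s := slice_cont hu.continuousOn hs0
  have bd : BddAbove ((fun x => u x s) '' E) := (cE.image cu).bddAbove
  have le : ∀ x, u x s * ww N q η n x s ≤ (closedBall (0 : Euc N) n).indicator (fun _ => m) x := by
    intro x
    by_cases hx : x ∈ E
    · rw [indicator_of_mem hx.1]
      calc u x s * ww N q η n x s ≤ m * 1 :=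
            mul_le_mul (le_csSup bd ⟨x, hx, rfl⟩) (ww_le hq h0 h1 n x hs0) (ww_nonneg _ _ _ _ _) hm0
        _ = m := mul_one m
    · have : ww N q η n x s = 0 := by
        by_cases hb : x ∈ closedBall (0 : Euc N) n
        · have hη : θ < η x := by
            by_contra hh'
            exact hx ⟨hb, not_lt.1 hh'⟩
          have hH := (abs_le.1 (hL s hs0 x)).1
          have hH2 : 1 / c ≤ heatPot N η x s := by linarith
          have : hh N η n x s ≤ 0 := by
            unfold hh
            have := mul_le_mul_of_nonneg_left hH2 (show 0 ≤ c by linarith)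
            rw [mul_one_div_cancel (by linarith)] at this
            linarith
          rw [ww, aa, max_eq_right this, zero_rpow (by linarith), zero_mul]
        · exact ww_zero hq η hn s hb
      rw [this, mul_zero]
      exact indicator_nonneg (fun _ _ => hm0) x
  calc ∫ x, u x s * ww N q η n x s ≤ ∫ x, (closedBall (0 : Euc N) n).indicator (fun _ => m) x := by
        refine integral_mono_of_nonneg (ae_of_all _ fun x => mul_nonneg (hpos x s hs0).le (ww_nonneg _ _ _ _ _))
          ((integrable_indicator_iff measurableSet_closedBall).2
            (integrableOn_const (isCompact_closedBall _ _).measure_lt_top.ne)) (ae_of_all _ le)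
    _ = V * m := by rw [integral_indicator measurableSet_closedBall, setIntegral_const, smul_eq_mul]
    _ ≤ (V + 1) * (ε / (V + 1)) := by gcongr; linarith
    _ = ε := by field_simp

lemma ww_lim {N : ℕ} {q : ℝ} (hq : 1 < q) {η : Euc N → ℝ} (h0 : ∀ x, 0 ≤ η x) (h1 : ∀ x, η x ≤ 1)
    (x : Euc N) {t : ℝ} (ht : 0 < t) :
    Tendsto (fun n : ℕ => ww N q η (n + 1) x t) atTop (nhds ((1 - heatPot N η x t) ^ (2 * (q / (q - 1))))) := by
  have hal := al_gt hq
  have hem := em_gt N hq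
  have t1 : Tendsto (fun n : ℕ => 1 / (((n + 1 : ℕ) : ℝ))) atTop (nhds 0) := by
    exact_mod_cast tendsto_one_div_add_atTop_nhds_zero_nat (𝕜 := ℝ)
  have ha : Tendsto (fun n : ℕ => aa N η (n + 1) x t) atTop (nhds (1 - heatPot N η x t)) := by
    have e : 1 - heatPot N η x t = max (1 - (1 + 0) * heatPot N η x t) 0 := by
      rw [add_zero, one_mul, max_eq_left]
      linarith [(hp_mem h0 h1 ht x).2]
    rw [e]
    exact (((t1.const_add 1).mul_const _).const_sub 1).max tendsto_const_nhds
  have hp : Tendsto (fun n : ℕ => pp (n + 1) x) atTop (nhds 1) := by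
    have e : (1:ℝ) = max (1 - ‖x‖ ^ 2 * 0 ^ 2) 0 := by norm_num
    rw [e]
    have := (((t1.pow 2).const_mul (‖x‖ ^ 2)).const_sub 1).max (tendsto_const_nhds (x := (0:ℝ)))
    refine this.congr fun n => ?_
    unfold pp gg
    rw [one_div, inv_pow, div_eq_mul_inv]
  have := (ha.rpow_const (p := al q) (Or.inr (by linarith))).mul (hp.rpow_const (p := emm N q) (Or.inr (by linarith)))
  rw [one_rpow, mul_one] at this
  exact this

lemma ofReal_int_le {α : Type*} [MeasurableSpace α] {μ : Measure α} {f : α → ℝ} (hf : ∀ᵐ x ∂μ, 0 ≤ f x) :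
    ENNReal.ofReal (∫ x, f x ∂μ) ≤ ∫⁻ x, ENNReal.ofReal (f x) ∂μ := by
  have h := enorm_integral_le_lintegral_enorm (μ := μ) f
  rw [Real.enorm_of_nonneg (integral_nonneg_of_ae hf)] at h
  refine h.trans (lintegral_mono_ae ?_)
  filter_upwards [hf] with x hx
  rw [Real.enorm_of_nonneg hx]

lemma fatou_x {N : ℕ} {q : ℝ} (hq : 1 < q) {η : Euc N → ℝ} (h : SC η) (h0 : ∀ x, 0 ≤ η x) (h1 : ∀ x, η x ≤ 1)
    {v : Euc N → ℝ} (hv : Continuous v) (hv0 : ∀ x, 0 ≤ v x) {t : ℝ} (ht : 0 < t) :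
    ENNReal.ofReal (∫ x, v x * (1 - heatPot N η x t) ^ (2 * (q / (q - 1)))) ≤
      liminf (fun n : ℕ => ENNReal.ofReal (∫ x, v x * ww N q η (n + 1) x t)) atTop := by
  refine (ofReal_int_le (ae_of_all _ fun x => mul_nonneg (hv0 x) (rpow_nonneg ?_ _))).trans ?_
  · linarith [(hp_mem h0 h1 ht x).2]
  have cw : ∀ n, Continuous fun x => v x * ww N q η n x t := fun n => hv.mul (ww_contDiff hq h n ht).continuous
  have e : ∀ n : ℕ, ENNReal.ofReal (∫ x, v x * ww N q η (n + 1) x t) =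
      ∫⁻ x, ENNReal.ofReal (v x * ww N q η (n + 1) x t) := fun n =>
    ofReal_integral_eq_lintegral_ofReal (int_cs (n := n + 1) (cw _) fun x hx => by
      rw [ww_zero hq η (by omega) t hx, mul_zero])
      (ae_of_all _ fun x => mul_nonneg (hv0 x) (ww_nonneg _ _ _ _ _))
  simp_rw [e]
  refine le_trans (le_of_eq ?_) (lintegral_liminf_le fun n => (cw (n + 1)).measurable.ennreal_ofReal)
  refine lintegral_congr fun x => ?_
  refine (Tendsto.liminf_eq ?_).symm
  exact (ENNReal.continuous_ofReal.tendsto _).comp ((ww_lim hq h0 h1 x ht).const_mul (v x))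

lemma main_aux {N : ℕ} {q : ℝ} (hq : 1 < q) {η : Euc N → ℝ} (h : SC η) (h0 : ∀ x, 0 ≤ η x)
    (h1 : ∀ x, η x ≤ 1) {K : Set (Euc N)} (hK : ∀ x ∈ K, η x = 1) {u : Euc N → ℝ → ℝ}
    (hu : IsSol N q u K) {T : ℝ} (hT : 0 < T) :
    (∫ t in Set.Ioc (0 : ℝ) T, ∫ x, u x t ^ q * (1 - heatPot N η x t) ^ (2 * (q / (q - 1)))) +
      (∫ x, u x T * (1 - heatPot N η x T) ^ (2 * (q / (q - 1)))) ≤ 3 * c3 N q * Rnorm N q η := by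
  have hR0 : 0 ≤ Rnorm N q η := by
    show 0 ≤ ∫ t in Ioi (0:ℝ), ∫ x, Rf N η x t ^ (q / (q - 1))
    exact integral_nonneg fun t => integral_nonneg fun x => rpow_nonneg (Rf_nonneg _ _ _ _) _
  have hc3 := c3_pos N hq
  have ini := fun n : ℕ => init_small hq h h0 h1 hK (n := n + 1) (by omega) hu
    (ε := min (1 / ((n : ℝ) + 1)) T) (lt_min (by positivity) hT)
  choose s hs0 hsle hsI using ini
  obtain ⟨hu2, hpos, hpde, -⟩ := hu
  have en := fun n : ℕ => energy hq h h0 h1 (n := n + 1) (by omega) hu2 hpos hpde (hs0 n)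
    ((hsle n).trans (min_le_right _ _))
  set κ := c4 N q * volume.real (ball (0 : Euc N) 1) with hκ
  set B : ℕ → ℝ := fun n => exp (c2 N q * (1 / ((n:ℝ) + 1)) * T) *
    (1 / ((n:ℝ) + 1) + c3 N q * Rnorm N q η + κ * (1 / ((n:ℝ) + 1)) * T) with hB
  have t1 : Tendsto (fun n : ℕ => 1 / ((n:ℝ) + 1)) atTop (nhds 0) := tendsto_one_div_add_atTop_nhds_zero_nat
  have hBlim : Tendsto B atTop (nhds (c3 N q * Rnorm N q η)) := by
    have a1 := (Real.continuous_exp.tendsto _).comp ((t1.const_mul (c2 N q)).mul_const T)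
    have a2 := (t1.add_const (c3 N q * Rnorm N q η)).add ((t1.const_mul κ).mul_const T)
    have := a1.mul a2
    simp only [mul_zero, zero_mul, Real.exp_zero, zero_add, add_zero, one_mul] at this
    exact this
  have hI0 : ∀ n : ℕ, 0 ≤ ∫ x, u x T * ww N q η (n + 1) x T := fun n =>
    integral_nonneg fun x => mul_nonneg (hpos x T hT).le (ww_nonneg _ _ _ _ _)
  have hA0 : ∀ (n : ℕ) t, 0 < t → 0 ≤ ∫ x, u x t ^ q * ww N q η (n + 1) x t := fun n t ht =>
    integral_nonneg fun x => mul_nonneg (rpow_nonneg (hpos x t ht).le _) (ww_nonneg _ _ _ _ _)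
  have hAA0 : ∀ n : ℕ, 0 ≤ ∫ t in Ioc (s n) T, ∫ x, u x t ^ q * ww N q η (n + 1) x t := fun n =>
    setIntegral_nonneg measurableSet_Ioc fun t ht => hA0 n t ((hs0 n).trans ht.1)
  have hsum : ∀ n : ℕ, (∫ x, u x T * ww N q η (n + 1) x T) +
      1 / 2 * ∫ t in Ioc (s n) T, ∫ x, u x t ^ q * ww N q η (n + 1) x t ≤ B n := by
    intro n
    have e1 := (en n).2
    have e2 := (hsI n).trans (min_le_left _ _)
    rw [kap_eq N q (by omega)] at e1
    push_cast at e1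
    have e3 := mul_le_mul_of_nonneg_left e1 (exp_pos (c2 N q * (1 / ((n:ℝ) + 1)) * T)).le
    rw [← mul_assoc, ← Real.exp_add, show c2 N q * (1 / ((n:ℝ) + 1)) * T + -(c2 N q / ((n:ℝ) + 1)) * T = 0 by ring,
      Real.exp_zero, one_mul] at e3
    refine e3.trans (mul_le_mul_of_nonneg_left ?_ (exp_pos _).le)
    linarith
  have hsum1 : ∀ n : ℕ, (∫ x, u x T * ww N q η (n + 1) x T) ≤ B n := fun n => by
    linarith [hsum n, hAA0 n]
  have hsum2 : ∀ n : ℕ, ∫ t in Ioc (s n) T, ∫ x, u x t ^ q * ww N q η (n + 1) x t ≤ 2 * B n := fun n => by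
    linarith [hsum n, hI0 n]
  have ux : ∀ t, 0 < t → Continuous fun x => u x t := fun t ht => slice_cont hu2.continuousOn ht
  -- terminal term
  have F1 : (∫ x, u x T * (1 - heatPot N η x T) ^ (2 * (q / (q - 1)))) ≤ c3 N q * Rnorm N q η := by
    have f := fatou_x hq h h0 h1 (ux T hT) (fun x => (hpos x T hT).le) hT
    have g : liminf (fun n : ℕ => ENNReal.ofReal (∫ x, u x T * ww N q η (n + 1) x T)) atTop ≤
        liminf (fun n : ℕ => ENNReal.ofReal (B n)) atTop :=
      liminf_le_liminf (Eventually.of_forall fun n => ENNReal.ofReal_le_ofReal (hsum1 n))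
    have lb : Tendsto (fun n => ENNReal.ofReal (B n)) atTop (nhds (ENNReal.ofReal (c3 N q * Rnorm N q η))) :=
      (ENNReal.continuous_ofReal.tendsto _).comp hBlim
    rw [lb.liminf_eq] at g
    exact (ENNReal.ofReal_le_ofReal_iff (by positivity)).1 (f.trans g)
  have F2 : (∫ t in Set.Ioc (0 : ℝ) T, ∫ x, u x t ^ q * (1 - heatPot N η x t) ^ (2 * (q / (q - 1)))) ≤
      2 * (c3 N q * Rnorm N q η) := by
    set g : ℕ → ℝ → ENNReal := fun n => (Ioc (s n) T).indicator fun t =>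
      ENNReal.ofReal (∫ x, u x t ^ q * ww N q η (n + 1) x t) with hg
    have gm : ∀ n, AEMeasurable (g n) (volume.restrict (Ioc 0 T)) := fun n => by
      have : AEMeasurable (g n) volume :=
        (aemeasurable_indicator_iff measurableSet_Ioc).2 (en n).1.1.aemeasurable.ennreal_ofReal
      exact this.restrict
    have gi : ∀ n, ∫⁻ t in Ioc 0 T, g n t ≤ ENNReal.ofReal (2 * B n) := by
      intro n
      refine (setLIntegral_le_lintegral _ _).trans ?_
      rw [hg, lintegral_indicator measurableSet_Ioc, ← ofReal_integral_eq_lintegral_ofReal (en n).1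
        ((ae_restrict_iff' measurableSet_Ioc).2 (ae_of_all _ fun t ht => hA0 n t ((hs0 n).trans ht.1)))]
      exact ENNReal.ofReal_le_ofReal (hsum2 n)
    have hnn : ∀ x t, 0 < t → 0 ≤ u x t ^ q * (1 - heatPot N η x t) ^ (2 * (q / (q - 1))) := fun x t ht =>
      mul_nonneg (rpow_nonneg (hpos x t ht).le _) (rpow_nonneg (by linarith [(hp_mem h0 h1 ht x).2]) _)
    have st : Tendsto s atTop (nhds 0) :=
      squeeze_zero (fun n => (hs0 n).le) (fun n => (hsle n).trans (min_le_left _ _)) t1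
    have f1 : ENNReal.ofReal (∫ t in Set.Ioc (0 : ℝ) T, ∫ x, u x t ^ q * (1 - heatPot N η x t) ^ (2 * (q / (q - 1)))) ≤
        ∫⁻ t in Ioc 0 T, liminf (fun n => g n t) atTop := by
      refine (ofReal_int_le ((ae_restrict_iff' measurableSet_Ioc).2 (ae_of_all _ fun t ht =>
        integral_nonneg fun x => hnn x t ht.1))).trans ?_
      refine lintegral_mono_ae ((ae_restrict_iff' measurableSet_Ioc).2 (ae_of_all _ fun t ht => ?_))
      refine (fatou_x hq h h0 h1 (v := fun x => u x t ^ q)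
        ((ux t ht.1).rpow_const fun _ => Or.inr (by linarith)) (fun x => rpow_nonneg (hpos x t ht.1).le _) ht.1).trans
        (le_of_eq ?_)
      refine liminf_congr ?_
      filter_upwards [st.eventually (gt_mem_nhds ht.1)] with n hn
      show _ = (Ioc (s n) T).indicator (fun t => ENNReal.ofReal (∫ x, u x t ^ q * ww N q η (n + 1) x t)) t
      rw [indicator_of_mem (show t ∈ Ioc (s n) T from ⟨hn, ht.2⟩)]
    have f2 : liminf (fun n : ℕ => ∫⁻ t in Ioc 0 T, g n t) atTop ≤
        liminf (fun n : ℕ => ENNReal.ofReal (2 * B n)) atTop :=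
      liminf_le_liminf (Eventually.of_forall gi)
    have lb : Tendsto (fun n => ENNReal.ofReal (2 * B n)) atTop
        (nhds (ENNReal.ofReal (2 * (c3 N q * Rnorm N q η)))) :=
      (ENNReal.continuous_ofReal.tendsto _).comp (hBlim.const_mul 2)
    rw [lb.liminf_eq] at f2
    exact (ENNReal.ofReal_le_ofReal_iff (by positivity)).1 (f1.trans ((lintegral_liminf_le' gm).trans f2))
  linarith

end

/-- Lemma 2.12: global weighted `L^q`-estimate with weight `ζ = (1-ℍ[η])^{2q'}`. -/
theorem stmt10 (N : ℕ) (hN : 1 ≤ N) (q : ℝ) (hq : 1 < q) :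
    ∃ C : ℝ, 0 < C ∧
      ∀ T r ρ : ℝ, 0 < T → 0 < r → 0 < ρ →
        ∀ K : Set (Euc N), IsCompact K → K ⊆ Metric.ball (0 : Euc N) r →
          ∀ η : Euc N → ℝ, TestFun N r ρ K η →
            ∀ u : Euc N → ℝ → ℝ, IsSol N q u K →
              (∫ t in Set.Ioc (0 : ℝ) T, ∫ x,
                    u x t ^ q * (1 - heatPot N η x t) ^ (2 * (q / (q - 1)))) +
                  (∫ x, u x T * (1 - heatPot N η x T) ^ (2 * (q / (q - 1)))) ≤
                C * Rnorm N q η := by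
  have hc3 := c3_pos N hq
  refine ⟨3 * c3 N q, by positivity, ?_⟩
  intro T r ρ hT _ _ K _ _ η hη u hu
  obtain ⟨a, b, _, d, e⟩ := hη
  exact main_aux hq ⟨a, b⟩ (fun x => (d x).1) (fun x => (d x).2) e hu hT

end
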